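/- arXiv:2505.22901 — 10 statements merged into one kernel-verified Lean document; each statement's English description precedes it below -/
import Mathlib

section
/- Fix integers n₊ ≥ 1 and n₋ ≥ 1 and set n = n₊ + n₋. Let μ > 0 with sin μ ≠ 0, set λ = μ², and let c ∈ ℂ. Then there is exactly one n-tuple f = (f₁, …, f_n) of twice continuously differentiable functions f_j : [0,1] → ℂ with f_j'' = −λ·f_j for 1 ≤ j ≤ n₊, f_j'' = λ·f_j for n₊+1 ≤ j ≤ n, f_j(1) = 0 for all j and f_j(0) = c for all j; and it satisfies ∑_{j=1}^n f_j'(0) = −μ·( n₊·cot μ + n₋·coth μ )·c. (In other words, the Weyl function of the boundary triple is M(λ) = −μ(n₊ cot μ + n₋ coth μ) for λ = μ² > 0.) -/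
/-- `KirchhoffData np nm lam c f` says that the tuple `f = (f₁, …, f_n)`, `n = np + nm`,
consists of twice continuously differentiable functions satisfying `fⱼ'' = −λ·fⱼ` on the
first `np` edges, `fⱼ'' = λ·fⱼ` on the last `nm` edges, the Dirichlet conditions
`fⱼ(1) = 0` at the outer vertices, and having the common value `c` at the central vertex. -/
def KirchhoffData (np nm : ℕ) (lam : ℝ) (c : ℂ) (f : Fin (np + nm) → ℝ → ℂ) : Prop :=
  (∀ j, ContDiff ℝ 2 (f j)) ∧
  (∀ j : Fin (np + nm), (j : ℕ) < np →
    ∀ x : ℝ, deriv (deriv (f j)) x = -(lam : ℂ) * f j x) ∧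
  (∀ j : Fin (np + nm), np ≤ (j : ℕ) →
    ∀ x : ℝ, deriv (deriv (f j)) x = (lam : ℂ) * f j x) ∧
  (∀ j, f j 1 = 0) ∧
  (∀ j, f j 0 = c)

noncomputable def solE (a c : ℂ) (x : ℝ) : ℂ := c * Complex.sinh (a * (1 - x)) / Complex.sinh a

lemma hlin (a b : ℂ) (x : ℝ) : HasDerivAt (fun x : ℝ => a * (b - (x : ℂ))) (-a) x := by
  have h := ((Complex.ofRealCLM.hasDerivAt (x := x)).const_sub b).const_mul a
  simpa using h

lemma solE_hasDeriv (a c : ℂ) (x : ℝ) :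
    HasDerivAt (solE a c) (-a * c * Complex.cosh (a * (1 - x)) / Complex.sinh a) x := by
  have h := (((Complex.hasDerivAt_sinh _).comp x (hlin a 1 x)).const_mul c).div_const
    (Complex.sinh a)
  exact h.congr_deriv (by ring)

lemma solE_deriv (a c : ℂ) :
    deriv (solE a c) = fun x : ℝ => -a * c * Complex.cosh (a * (1 - x)) / Complex.sinh a :=
  funext fun x => (solE_hasDeriv a c x).deriv

lemma solE_deriv2 (a c : ℂ) (x : ℝ) : deriv (deriv (solE a c)) x = a ^ 2 * solE a c x := by
  rw [solE_deriv]
  have h := (((Complex.hasDerivAt_cosh _).comp x (hlin a 1 x)).const_mul (-a * c)).div_const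
    (Complex.sinh a)
  refine Eq.trans (HasDerivAt.deriv h) ?_
  unfold solE
  ring

lemma solE_contDiff (a c : ℂ) : ContDiff ℝ 2 (solE a c) := by
  have h0 : ContDiff ℝ 2 (fun x : ℝ => (x : ℂ)) := Complex.ofRealCLM.contDiff
  have h1 : ContDiff ℝ 2 (fun x : ℝ => a * (1 - (x : ℂ))) :=
    contDiff_const.mul (contDiff_const.sub h0)
  have h2 : ContDiff ℝ 2 Complex.sinh := Complex.contDiff_sinh.restrict_scalars ℝ
  unfold solE
  exact (contDiff_const.mul (h2.comp h1)).div_const _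

lemma first_int (a : ℂ) (f : ℝ → ℂ) (hf : ContDiff ℝ 2 f)
    (h : ∀ x, deriv (deriv f) x = a ^ 2 * f x) (x : ℝ) :
    deriv f x - a * f x = (deriv f 1 - a * f 1) * Complex.exp (a * (x - 1) * (-1)) := by
  have d1 : Differentiable ℝ f := hf.differentiable (by norm_num)
  have d2 : Differentiable ℝ (deriv f) := by
    have : ContDiff ℝ (1 + 1) f := by simpa [one_add_one_eq_two] using hf
    exact (contDiff_succ_iff_deriv.1 this).2.2.differentiable (by norm_num)
  have key : ∀ y : ℝ, HasDerivAt
      (fun y : ℝ => (deriv f y - a * f y) * Complex.exp (-a * (1 - (y : ℂ)))) 0 y := by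
    intro y
    have e := (Complex.hasDerivAt_exp _).comp y (hlin (-a) 1 y)
    have g := ((d2 y).hasDerivAt.sub ((d1 y).hasDerivAt.const_mul a)).mul e
    refine HasDerivAt.congr_deriv g ?_
    rw [h]
    simp only [Function.comp, Pi.sub_apply]
    ring
  have hc := is_const_of_deriv_eq_zero (fun y => (key y).differentiableAt)
    (fun y => (key y).deriv) x 1
  simp only [Complex.ofReal_one, sub_self, mul_zero, Complex.exp_zero, mul_one] at hc
  rw [← hc, mul_assoc, ← Complex.exp_add]
  ring_nf
  simp

lemma solE_unique (a c : ℂ) (ha : a ≠ 0) (hs : Complex.sinh a ≠ 0) (f : ℝ → ℂ)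
    (hf : ContDiff ℝ 2 f) (h : ∀ x, deriv (deriv f) x = a ^ 2 * f x) (h1 : f 1 = 0)
    (h0 : f 0 = c) : f = solE a c := by
  have gen : ∀ x : ℝ, a * f x = - deriv f 1 * Complex.sinh (a * (1 - x)) := by
    intro x
    have A := first_int a f hf h x
    have B := first_int (-a) f hf (by simpa using h) x
    rw [h1] at A B
    rw [Complex.sinh]
    have e1 : a * ((x : ℂ) - 1) * (-1) = a * (1 - x) := by ring
    have e2 : -a * ((x : ℂ) - 1) * (-1) = -(a * (1 - x)) := by ring
    rw [e1] at A
    rw [e2] at B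
    linear_combination (B - A) / 2
  have g0 := gen 0
  rw [h0] at g0
  simp only [Complex.ofReal_zero, sub_zero, mul_one] at g0
  funext x
  have gx := gen x
  unfold solE
  rw [eq_div_iff hs]
  apply mul_left_cancel₀ ha
  linear_combination Complex.sinh a * gx - Complex.sinh (a * (1 - x)) * g0

noncomputable def edgeA (np : ℕ) (μ : ℝ) (j : ℕ) : ℂ := if j < np then μ * Complex.I else μ

lemma edgeA_ne (np : ℕ) (μ : ℝ) (hμ : 0 < μ) (j : ℕ) : edgeA np μ j ≠ 0 := by
  have : (μ : ℂ) ≠ 0 := by exact_mod_cast hμ.ne'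
  unfold edgeA
  split_ifs <;> simp [this]

lemma edgeA_sinh (np : ℕ) (μ : ℝ) (hμ : 0 < μ) (hsin : Real.sin μ ≠ 0) (j : ℕ) :
    Complex.sinh (edgeA np μ j) ≠ 0 := by
  unfold edgeA
  split_ifs
  · rw [Complex.sinh_mul_I, ← Complex.ofReal_sin]
    exact mul_ne_zero (by exact_mod_cast hsin) Complex.I_ne_zero
  · rw [← Complex.ofReal_sinh]
    exact_mod_cast (Real.sinh_pos_iff.2 hμ).ne'

lemma kd_eq (np nm : ℕ) (μ : ℝ) (hμ : 0 < μ) (hsin : Real.sin μ ≠ 0) (c : ℂ)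
    (f : Fin (np + nm) → ℝ → ℂ) (hf : KirchhoffData np nm (μ ^ 2) c f) :
    f = fun j : Fin (np + nm) => solE (edgeA np μ j) c := by
  obtain ⟨h1, h2, h3, h4, h5⟩ := hf
  funext j

  refine solE_unique _ c (edgeA_ne np μ hμ j) (edgeA_sinh np μ hμ hsin j) _ (h1 j) ?_ (h4 j) (h5 j)
  intro x
  unfold edgeA
  split_ifs with hj
  · rw [h2 j hj x, mul_pow, Complex.I_sq]
    push_cast
    ring
  · rw [h3 j (not_lt.1 hj) x]
    push_cast
    ring

lemma kd_sol (np nm : ℕ) (μ : ℝ) (hμ : 0 < μ) (hsin : Real.sin μ ≠ 0) (c : ℂ) :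
    KirchhoffData np nm (μ ^ 2) c (fun j : Fin (np + nm) => solE (edgeA np μ j) c) := by
  refine ⟨fun j => solE_contDiff _ _, ?_, ?_, ?_, ?_⟩
  · intro j hj x
    rw [solE_deriv2]
    simp only [edgeA, if_pos hj]
    rw [mul_pow, Complex.I_sq]
    push_cast
    ring
  · intro j hj x
    rw [solE_deriv2]
    simp only [edgeA, if_neg (not_lt.2 hj)]
    push_cast
    ring
  · intro j
    simp [solE]
  · intro j
    have := edgeA_sinh np μ hμ hsin j
    simp [solE, this]


/-- The Weyl function of the boundary triple at `λ = μ² > 0` is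
`M(λ) = −μ(n₊ cot μ + n₋ coth μ)`: for `μ > 0` with `sin μ ≠ 0` and `c ∈ ℂ` there is exactly
one tuple `f` solving the eigenvalue equations with Dirichlet conditions at the outer
vertices and value `c` at the central vertex, and it satisfies
`∑ⱼ fⱼ'(0) = −μ(n₊ cot μ + n₋ coth μ)·c`. -/
theorem stmt_4 (np nm : ℕ) (hp : 1 ≤ np) (hm : 1 ≤ nm) (μ : ℝ) (hμ : 0 < μ)
    (hsin : Real.sin μ ≠ 0) (c : ℂ) :
    (∃! f : Fin (np + nm) → ℝ → ℂ, KirchhoffData np nm (μ ^ 2) c f) ∧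
    (∀ f : Fin (np + nm) → ℝ → ℂ, KirchhoffData np nm (μ ^ 2) c f →
      ∑ j : Fin (np + nm), deriv (f j) 0
        = -(μ : ℂ) * ((np : ℂ) * ((Real.cos μ / Real.sin μ : ℝ) : ℂ)
            + (nm : ℂ) * ((Real.cosh μ / Real.sinh μ : ℝ) : ℂ)) * c) := by
  refine ⟨⟨_, kd_sol np nm μ hμ hsin c, fun g hg => kd_eq np nm μ hμ hsin c g hg⟩, ?_⟩
  intro f hf
  rw [kd_eq np nm μ hμ hsin c f hf, Fin.sum_univ_add]
  have hs : Complex.sin μ ≠ 0 := by rw [← Complex.ofReal_sin]; exact_mod_cast hsin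
  have hsh : Complex.sinh μ ≠ 0 := by
    rw [← Complex.ofReal_sinh]; exact_mod_cast (Real.sinh_pos_iff.2 hμ).ne'
  have e1 : ∀ i : Fin np, deriv (solE (edgeA np μ (Fin.castAdd nm i : Fin (np + nm))) c) 0
      = -μ * (Complex.cos μ / Complex.sin μ) * c := by
    intro i
    rw [solE_deriv]
    simp only [edgeA, Fin.val_castAdd, i.2, if_true, Complex.ofReal_zero, sub_zero, mul_one,
      Complex.sinh_mul_I, Complex.cosh_mul_I]
    have := Complex.I_ne_zero
    field_simp
  have e2 : ∀ i : Fin nm, deriv (solE (edgeA np μ (Fin.natAdd np i : Fin (np + nm))) c) 0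
      = -μ * (Complex.cosh μ / Complex.sinh μ) * c := by
    intro i
    rw [solE_deriv]
    have : ¬ (np + (i : ℕ) < np) := by omega
    simp only [edgeA, Fin.val_natAdd, this, if_false, Complex.ofReal_zero, sub_zero, mul_one]
    ring
  simp only [e1, e2, Finset.sum_const, Finset.card_univ, Fintype.card_fin, nsmul_eq_mul]
  push_cast
  ring
end

section
/- Let n ≥ 1 be an integer and let f = (f₁, …, f_n) be an n-tuple of twice continuously differentiable functions f_j : [0,1] → ℂ with f_j(1) = 0 for all j, f₁(0) = ⋯ = f_n(0), and ∑_{j=1}^n f_j'(0) = 0. Then ∑_{j=1}^n ∫₀¹ (−f_j''(x))·conj(f_j(x)) dx = ∑_{j=1}^n ∫₀¹ |f_j'(x)|² dx, and this quantity is ≥ ∑_{j=1}^n ∫₀¹ |f_j(x)|² dx; in particular it is strictly positive whenever f ≠ 0. -/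
open MeasureTheory

lemma aux_ibp (g : ℝ → ℂ) (hg : ContDiff ℝ 2 g) (h1 : g 1 = 0) :
    (∫ x in (0:ℝ)..1, (-(deriv (deriv g) x)) * (starRingEnd ℂ) (g x))
      = deriv g 0 * (starRingEnd ℂ) (g 0) + ((∫ x in (0:ℝ)..1, ‖deriv g x‖ ^ 2 : ℝ) : ℂ) := by
  have hg' : ContDiff ℝ 1 (deriv g) := by
    have : ContDiff ℝ (1 + 1) g := by simpa [one_add_one_eq_two] using hg
    exact (contDiff_succ_iff_deriv.1 this).2.2
  have c0 : Continuous g := hg.continuous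
  have c1 : Continuous (deriv g) := hg'.continuous
  have c2 : Continuous (deriv (deriv g)) := hg'.continuous_deriv le_rfl
  have d0 : ∀ x, HasDerivAt g (deriv g x) x := fun x =>
    (hg.differentiable (by norm_num) x).hasDerivAt
  have d1 : ∀ x, HasDerivAt (deriv g) (deriv (deriv g) x) x := fun x =>
    (hg'.differentiable (by norm_num) x).hasDerivAt
  have ds : ∀ x, HasDerivAt (fun x => (starRingEnd ℂ) (g x)) ((starRingEnd ℂ) (deriv g x)) x :=
    fun x => (d0 x).star
  have cs : Continuous (fun x => (starRingEnd ℂ) (g x)) := Complex.continuous_conj.comp c0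
  have cs1 : Continuous (fun x => (starRingEnd ℂ) (deriv g x)) := Complex.continuous_conj.comp c1
  have key := intervalIntegral.integral_deriv_mul_eq_sub (a := (0:ℝ)) (b := 1)
    (fun x _ => d1 x) (fun x _ => ds x)
    (c2.intervalIntegrable _ _) (cs1.intervalIntegrable _ _)
  rw [intervalIntegral.integral_add (Continuous.intervalIntegrable (by fun_prop) _ _)
    (Continuous.intervalIntegrable (by fun_prop) _ _)] at key
  have e2 : (∫ x in (0:ℝ)..1, deriv g x * (starRingEnd ℂ) (deriv g x))
      = ((∫ x in (0:ℝ)..1, ‖deriv g x‖ ^ 2 : ℝ) : ℂ) := by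
    rw [← intervalIntegral.integral_ofReal]
    congr 1; ext x
    rw [Complex.mul_conj']; push_cast; rfl
  rw [e2, h1, map_zero, mul_zero] at key
  simp only [neg_mul, intervalIntegral.integral_neg]
  linear_combination -key

lemma aux_pt (g : ℝ → ℂ) (hg : ContDiff ℝ 2 g) (h1 : g 1 = 0) (x : ℝ)
    (hx : x ∈ Set.Icc (0:ℝ) 1) :
    ‖g x‖ ^ 2 ≤ ∫ x in (0:ℝ)..1, ‖deriv g x‖ ^ 2 := by
  have c1 : Continuous (deriv g) := hg.continuous_deriv (by norm_num)
  have d0 : ∀ x, HasDerivAt g (deriv g x) x := fun x =>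
    (hg.differentiable (by norm_num) x).hasDerivAt
  have cn : Continuous (fun x => ‖deriv g x‖) := c1.norm
  set A := ∫ x in (0:ℝ)..1, ‖deriv g x‖ with hA
  have hle : ‖g x‖ ≤ A := by
    have := intervalIntegral.integral_eq_sub_of_hasDerivAt (a := x) (b := 1)
      (fun y _ => d0 y) (c1.intervalIntegrable _ _)
    rw [h1, zero_sub] at this
    rw [← norm_neg, ← this]
    refine (intervalIntegral.norm_integral_le_integral_norm hx.2).trans ?_
    exact intervalIntegral.integral_mono_interval hx.1 hx.2 le_rfl
      (Filter.Eventually.of_forall fun y => norm_nonneg _) (cn.intervalIntegrable _ _)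
  have hsq : 0 ≤ ∫ x in (0:ℝ)..1, (‖deriv g x‖ - A) ^ 2 :=
    intervalIntegral.integral_nonneg zero_le_one fun y _ => sq_nonneg _
  have : (∫ x in (0:ℝ)..1, (‖deriv g x‖ - A) ^ 2)
      = (∫ x in (0:ℝ)..1, ‖deriv g x‖ ^ 2) - 2 * A * A + A ^ 2 := by
    have : ∀ x, (‖deriv g x‖ - A) ^ 2 = ‖deriv g x‖ ^ 2 - 2 * A * ‖deriv g x‖ + A ^ 2 := by
      intro x; ring
    simp only [this]
    rw [intervalIntegral.integral_add (Continuous.intervalIntegrable (by fun_prop) _ _)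
      (Continuous.intervalIntegrable (by fun_prop) _ _),
      intervalIntegral.integral_sub (Continuous.intervalIntegrable (by fun_prop) _ _)
      (Continuous.intervalIntegrable (by fun_prop) _ _),
      intervalIntegral.integral_const_mul]
    simp [← hA]
  have := pow_le_pow_left₀ (norm_nonneg _) hle 2
  nlinarith

/-- For a tuple `f` in the domain of the indefinite Kirchhoff Laplacian (Dirichlet at the
outer vertices, continuity and Kirchhoff condition at the central vertex),
`∑ⱼ ∫₀¹ (−fⱼ'')·f̄ⱼ = ∑ⱼ ∫₀¹ |fⱼ'|²`, this quantity dominates `∑ⱼ ∫₀¹ |fⱼ|²`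
(Poincaré), and it is strictly positive whenever `f` does not vanish on the graph. -/
theorem stmt_6 (n : ℕ) (hn : 0 < n) (f : Fin n → ℝ → ℂ)
    (hf : ∀ j, ContDiff ℝ 2 (f j))
    (hf1 : ∀ j, f j 1 = 0)
    (hf0 : ∀ j k, f j 0 = f k 0)
    (hK : ∑ j : Fin n, deriv (f j) 0 = 0) :
    (∑ j : Fin n, ∫ x in (0:ℝ)..1, (-(deriv (deriv (f j)) x)) * (starRingEnd ℂ) (f j x))
      = ((∑ j : Fin n, ∫ x in (0:ℝ)..1, ‖deriv (f j) x‖ ^ 2 : ℝ) : ℂ) ∧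
    (∑ j : Fin n, ∫ x in (0:ℝ)..1, ‖f j x‖ ^ 2)
      ≤ ∑ j : Fin n, ∫ x in (0:ℝ)..1, ‖deriv (f j) x‖ ^ 2 ∧
    ((∃ j : Fin n, ∃ x ∈ Set.Icc (0:ℝ) 1, f j x ≠ 0) →
      0 < ∑ j : Fin n, ∫ x in (0:ℝ)..1, ‖deriv (f j) x‖ ^ 2) := by
  have nn : ∀ j, 0 ≤ ∫ x in (0:ℝ)..1, ‖deriv (f j) x‖ ^ 2 := fun j =>
    intervalIntegral.integral_nonneg zero_le_one fun y _ => sq_nonneg _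
  refine ⟨?_, ?_, ?_⟩
  · rw [Finset.sum_congr rfl fun j _ => aux_ibp (f j) (hf j) (hf1 j), Finset.sum_add_distrib]
    rw [Finset.sum_congr rfl fun j _ => by rw [hf0 j ⟨0, hn⟩], ← Finset.sum_mul, hK]
    push_cast
    simp
  · refine Finset.sum_le_sum fun j _ => ?_
    have c0 : Continuous (f j) := (hf j).continuous
    have := intervalIntegral.integral_mono_on (μ := volume) (a := (0:ℝ)) (b := 1) zero_le_one
      (f := fun x => ‖f j x‖ ^ 2) (g := fun _ => ∫ x in (0:ℝ)..1, ‖deriv (f j) x‖ ^ 2)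
      (Continuous.intervalIntegrable (by fun_prop) _ _)
      (Continuous.intervalIntegrable (by fun_prop) _ _)
      (fun x hx => aux_pt (f j) (hf j) (hf1 j) x hx)
    simpa using this
  · rintro ⟨j, x, hx, hne⟩
    refine Finset.sum_pos' (fun j _ => nn j) ⟨j, Finset.mem_univ _, ?_⟩
    exact lt_of_lt_of_le (by positivity) (aux_pt (f j) (hf j) (hf1 j) x hx)
end

section
/- Fix integers n₊ ≥ 1 and n₋ ≥ 1. For every integer k ≥ 1 there exists exactly one μ in the open interval ((k−1)π, kπ) satisfying n₊·cot μ + n₋·coth μ = 0. -/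
theorem aux_anti (p m c : ℝ) (hp : 0 < p) (hm : 0 < m) (hc : 0 ≤ c) (a b : ℝ) (ha : 0 < a)
    (hab : a < b) (hb : b < Real.pi) :
    p * (Real.cos b / Real.sin b) + m * (Real.cosh (b + c) / Real.sinh (b + c)) <
    p * (Real.cos a / Real.sin a) + m * (Real.cosh (a + c) / Real.sinh (a + c)) := by
  have sa : 0 < Real.sin a := Real.sin_pos_of_pos_of_lt_pi ha (by linarith)
  have sb : 0 < Real.sin b := Real.sin_pos_of_pos_of_lt_pi (by linarith) hb
  have sab : 0 < Real.sin (b - a) := Real.sin_pos_of_pos_of_lt_pi (by linarith) (by linarith)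
  have ta : 0 < Real.sinh (a + c) := Real.sinh_pos_iff.2 (by linarith)
  have tb : 0 < Real.sinh (b + c) := Real.sinh_pos_iff.2 (by linarith)
  have tab : 0 < Real.sinh ((b + c) - (a + c)) := Real.sinh_pos_iff.2 (by linarith)
  rw [Real.sin_sub] at sab
  rw [Real.sinh_sub] at tab
  have h1 : Real.cos b / Real.sin b < Real.cos a / Real.sin a := by
    rw [div_lt_div_iff₀ sb sa]; linarith
  have h2 : Real.cosh (b + c) / Real.sinh (b + c) < Real.cosh (a + c) / Real.sinh (a + c) := by
    rw [div_lt_div_iff₀ tb ta]; linarith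
  have := mul_lt_mul_of_pos_left h1 hp
  have := mul_lt_mul_of_pos_left h2 hm
  linarith

theorem aux_cot (j : ℕ) (x : ℝ) :
    Real.cos (x + j * Real.pi) / Real.sin (x + j * Real.pi) = Real.cos x / Real.sin x := by
  rw [Real.cos_add_nat_mul_pi, Real.sin_add_nat_mul_pi]
  exact mul_div_mul_left _ _ (pow_ne_zero _ (by norm_num))

theorem aux_ex (p m c : ℝ) (hp : 0 < p) (hm : 0 < m) (hc : 0 ≤ c) :
    ∃ x, 0 < x ∧ x < Real.pi ∧
    p * (Real.cos x / Real.sin x) + m * (Real.cosh (x + c) / Real.sinh (x + c)) = 0 := by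
  have hpi := Real.pi_pos
  have h := intermediate_value_Ioo' (a := Real.pi / 2) (b := Real.pi) (by linarith)
    (f := fun x => p * (Real.cos x * Real.sinh (x + c)) + m * (Real.sin x * Real.cosh (x + c)))
    (by
      have := Real.continuous_sinh
      have := Real.continuous_cosh
      fun_prop)
  have h0 : 0 < Real.sinh (Real.pi + c) := Real.sinh_pos_iff.2 (by linarith)
  have h1 : 0 < Real.cosh (Real.pi / 2 + c) := Real.cosh_pos _
  obtain ⟨x, ⟨hx1, hx2⟩, hx⟩ := h (show (0 : ℝ) ∈ _ by
    constructor
    · simp only [Real.cos_pi, Real.sin_pi]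
      have := mul_pos hp h0
      linarith
    · simp only [Real.cos_pi_div_two, Real.sin_pi_div_two]
      have := mul_pos hm h1
      linarith)
  have sx : 0 < Real.sin x := Real.sin_pos_of_pos_of_lt_pi (by linarith) hx2
  have tx : 0 < Real.sinh (x + c) := Real.sinh_pos_iff.2 (by linarith)
  refine ⟨x, by linarith, hx2, ?_⟩
  have sx' := sx.ne'
  have tx' := tx.ne'
  simp only at hx
  field_simp
  linarith

/-- For all integers `n₊, n₋ ≥ 1` and every integer `k ≥ 1` there is exactly one
`μ ∈ ((k−1)π, kπ)` with `n₊·cot μ + n₋·coth μ = 0`. -/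
theorem stmt_7 (np nm : ℕ) (hp : 1 ≤ np) (hm : 1 ≤ nm) (k : ℕ) (hk : 1 ≤ k) :
    ∃! μ : ℝ, μ ∈ Set.Ioo (((k : ℝ) - 1) * Real.pi) ((k : ℝ) * Real.pi) ∧
      (np : ℝ) * (Real.cos μ / Real.sin μ) + (nm : ℝ) * (Real.cosh μ / Real.sinh μ) = 0 := by
  obtain ⟨j, rfl⟩ : ∃ j, k = j + 1 := ⟨k - 1, by omega⟩
  have hp' : (0 : ℝ) < np := by exact_mod_cast hp
  have hm' : (0 : ℝ) < nm := by exact_mod_cast hm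
  have hc : 0 ≤ (j : ℝ) * Real.pi := by positivity
  obtain ⟨x, hx0, hx1, hx⟩ := aux_ex np nm (j * Real.pi) hp' hm' hc
  push_cast
  refine ⟨x + j * Real.pi, ⟨⟨by linarith, by linarith⟩, ?_⟩, ?_⟩
  · rw [aux_cot]; exact hx
  · rintro y ⟨⟨hy0, hy1⟩, hy⟩
    obtain ⟨z, rfl⟩ : ∃ z, y = z + j * Real.pi := ⟨y - j * Real.pi, by ring⟩
    rw [aux_cot] at hy
    have hz0 : 0 < z := by linarith
    have hz1 : z < Real.pi := by linarith
    rcases lt_trichotomy z x with h | h | h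
    · have := aux_anti np nm (j * Real.pi) hp' hm' hc z x hz0 h hx1
      linarith
    · rw [h]
    · have := aux_anti np nm (j * Real.pi) hp' hm' hc x z hx0 h hz1
      linarith
end

section
/- Fix integers n₊ ≥ 1 and n₋ ≥ 1 and set n = n₊ + n₋. Let λ > 0 be such that sin √λ ≠ 0 (i.e., λ ≠ (kπ)² for every positive integer k). If n₊·cot √λ + n₋·coth √λ = 0 then dim E_B(λ) = 1, and if n₊·cot √λ + n₋·coth √λ ≠ 0 then E_B(λ) = {0}. -/
/-- `InEigenspaceB np nm lam f` says that the tuple `f = (f₁, …, f_n)`, `n = np + nm`,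
lies in the `λ`-eigenspace `E_B(λ)` of the indefinite Kirchhoff Laplacian `B`: the `fⱼ`
are twice continuously differentiable, `fⱼ'' = −λ·fⱼ` on the first `np` edges,
`fⱼ'' = λ·fⱼ` on the last `nm` edges, `fⱼ(1) = 0` (Dirichlet at the outer vertices),
`f₁(0) = ⋯ = f_n(0)` (continuity at the central vertex) and `∑ⱼ fⱼ'(0) = 0`
(Kirchhoff condition). -/
def InEigenspaceB (np nm : ℕ) (lam : ℝ) (f : Fin (np + nm) → ℝ → ℂ) : Prop :=
  (∀ j, ContDiff ℝ 2 (f j)) ∧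
  (∀ j : Fin (np + nm), (j : ℕ) < np →
    ∀ x : ℝ, deriv (deriv (f j)) x = -(lam : ℂ) * f j x) ∧
  (∀ j : Fin (np + nm), np ≤ (j : ℕ) →
    ∀ x : ℝ, deriv (deriv (f j)) x = (lam : ℂ) * f j x) ∧
  (∀ j, f j 1 = 0) ∧
  (∀ j k, f j 0 = f k 0) ∧
  (∑ j : Fin (np + nm), deriv (f j) 0 = 0)

lemma aux_solve (μ : ℂ) (hμ : μ ≠ 0) (f : ℝ → ℂ) (hf : ContDiff ℝ 2 f)
    (hode : ∀ x : ℝ, deriv (deriv f) x = μ ^ 2 * f x) (h1 : f 1 = 0) (x : ℝ) :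
    μ * f x = - (deriv f 1 * Complex.sinh (μ * (1 - x))) ∧
    deriv f x = deriv f 1 * Complex.cosh (μ * (1 - x)) := by
  have hd : ∀ x, HasDerivAt f (deriv f x) x := fun x =>
    (hf.differentiable (by norm_num) x).hasDerivAt
  have hdd : ∀ x, HasDerivAt (deriv f) (μ ^ 2 * f x) x := fun x => by
    rw [← hode x]
    have : ContDiff ℝ 1 (deriv f) := ContDiff.deriv' hf
    exact (this.differentiable (by norm_num) x).hasDerivAt
  have key : ∀ ν : ℂ, ν ^ 2 = μ ^ 2 → ∀ x : ℝ,
      deriv f x + ν * f x = deriv f 1 * Complex.exp (- (ν * (1 - x))) := by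
    intro ν hν x
    have he : ∀ x : ℝ, HasDerivAt (fun x : ℝ => Complex.exp (ν * (1 - x)))
        (Complex.exp (ν * (1 - x)) * (ν * (-1))) x := fun x =>
      (((Complex.ofRealCLM.hasDerivAt (x := x)).const_sub 1).const_mul ν).cexp
    have hc : ∀ x : ℝ, HasDerivAt
        (fun x : ℝ => (deriv f x + ν * f x) * Complex.exp (ν * (1 - x))) 0 x := by
      intro x
      have := ((hdd x).add ((hd x).const_mul ν)).mul (he x)
      refine this.congr_deriv ?_
      rw [← hν]
      simp only [Pi.add_apply]
      ring
    have h := is_const_of_deriv_eq_zero (fun x => (hc x).differentiableAt)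
      (fun x => (hc x).deriv) x 1
    simp only [h1, Complex.ofReal_one, sub_self, mul_zero, Complex.exp_zero, mul_one,
      add_zero] at h
    rw [← h, mul_assoc, ← Complex.exp_add]
    simp
  have a := key μ rfl x
  have b := key (-μ) (by ring) x
  simp only [neg_mul, neg_neg] at a b
  simp only [Complex.sinh, Complex.cosh]
  constructor
  · linear_combination (a - b) / 2
  · linear_combination (a + b) / 2

lemma aux_hasDeriv (μ : ℂ) (x : ℝ) :
    HasDerivAt (fun x : ℝ => Complex.sinh (μ * (1 - x)) / Complex.sinh μ)
      (-μ * Complex.cosh (μ * (1 - x)) / Complex.sinh μ) x := by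
  have := ((Complex.hasDerivAt_sinh _).comp x
    (((Complex.ofRealCLM.hasDerivAt (x := x)).const_sub 1).const_mul μ)).div_const (Complex.sinh μ)
  refine this.congr_deriv ?_
  simp
  ring

lemma aux_hasDeriv2 (μ : ℂ) (x : ℝ) :
    HasDerivAt (fun x : ℝ => -μ * Complex.cosh (μ * (1 - x)) / Complex.sinh μ)
      (μ ^ 2 * (Complex.sinh (μ * (1 - x)) / Complex.sinh μ)) x := by
  have := (((Complex.hasDerivAt_cosh _).comp x
    (((Complex.ofRealCLM.hasDerivAt (x := x)).const_sub 1).const_mul μ)).const_mul (-μ)).div_const (Complex.sinh μ)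
  refine this.congr_deriv ?_
  simp
  ring

/-- the exponent on edge `j` -/
noncomputable def edgeMu (np : ℕ) (s : ℝ) (j : ℕ) : ℂ :=
  if j < np then (s : ℂ) * Complex.I else (s : ℂ)

lemma aux_sum (np nm : ℕ) (s : ℝ) :
    ∑ j : Fin (np + nm), edgeMu np s j * (Complex.cosh (edgeMu np s j) /
      Complex.sinh (edgeMu np s j)) =
    (s : ℂ) * (((np : ℝ) * (Real.cos s / Real.sin s)
        + (nm : ℝ) * (Real.cosh s / Real.sinh s) : ℝ) : ℂ) := by
  rw [Fin.sum_univ_add]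
  simp only [edgeMu, Fin.val_castAdd, Fin.is_lt, if_true, Fin.val_natAdd,
    not_lt.2 (Nat.le_add_right _ _), if_false, Finset.sum_const, Finset.card_univ,
    Fintype.card_fin, Complex.cosh_mul_I, Complex.sinh_mul_I, nsmul_eq_mul]
  push_cast
  have : (s : ℂ) * Complex.I * (Complex.cos s / (Complex.sin s * Complex.I))
      = s * (Complex.cos s / Complex.sin s) := by
    rw [← div_div, mul_assoc, mul_div_cancel₀ _ Complex.I_ne_zero]
  rw [this]
  ring

lemma aux_main (np nm : ℕ) (hp : 1 ≤ np) (s : ℝ) (hs : 0 < s)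
    (hsin : Real.sin s ≠ 0) (g : Fin (np + nm) → ℝ → ℂ)
    (hg : InEigenspaceB np nm (s ^ 2) g) :
    ∃ c : ℂ, (∀ j x, g j x = c * (Complex.sinh (edgeMu np s j * (1 - x)) /
      Complex.sinh (edgeMu np s j))) ∧
      c * (((np : ℝ) * (Real.cos s / Real.sin s)
        + (nm : ℝ) * (Real.cosh s / Real.sinh s) : ℝ) : ℂ) = 0 := by
  obtain ⟨hC, hP, hM, hD, h0, hK⟩ := hg
  have hs0 : (s : ℂ) ≠ 0 := by exact_mod_cast hs.ne'
  have hmu : ∀ j, edgeMu np s j ≠ 0 := by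
    intro j; unfold edgeMu; split_ifs <;> simp [hs.ne']
  have hsh : ∀ j, Complex.sinh (edgeMu np s j) ≠ 0 := by
    intro j; unfold edgeMu; split_ifs
    · rw [Complex.sinh_mul_I]
      exact mul_ne_zero (by exact_mod_cast hsin) Complex.I_ne_zero
    · have := (Real.sinh_pos_iff.2 hs).ne'
      exact_mod_cast this
  have hode : ∀ j x, deriv (deriv (g j)) x = edgeMu np s j ^ 2 * g j x := by
    intro j x
    by_cases h : (j : ℕ) < np
    · rw [hP j h x, edgeMu, if_pos h, mul_pow, Complex.I_sq]; push_cast; ring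
    · rw [hM j (not_lt.1 h) x, edgeMu, if_neg h]; push_cast; ring
  have hsol := fun j : Fin (np + nm) => aux_solve _ (hmu j) (g j) (hC j) (hode j) (hD j)
  let i0 : Fin (np + nm) := ⟨0, by omega⟩
  have hd1 : ∀ j, deriv (g j) 1 = - (edgeMu np s j * g i0 0 / Complex.sinh (edgeMu np s j)) := by
    intro j
    have h := (hsol j 0).1
    rw [h0 j i0] at h
    simp only [Complex.ofReal_zero, sub_zero, mul_one] at h
    rw [h, neg_div, neg_neg, mul_div_cancel_right₀ _ (hsh j)]
  refine ⟨g i0 0, ?_, ?_⟩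
  · intro j x
    have h := (hsol j x).1
    rw [hd1] at h
    apply mul_left_cancel₀ (hmu j)
    rw [h]; ring
  · apply mul_left_cancel₀ hs0
    rw [mul_left_comm, ← aux_sum, mul_zero, Finset.mul_sum, ← neg_eq_zero, ← Finset.sum_neg_distrib,
      ← hK]
    refine Finset.sum_congr rfl fun j _ => ?_
    rw [(hsol j 0).2, hd1]
    simp only [Complex.ofReal_zero, sub_zero, mul_one]
    ring

lemma aux_exists (np nm : ℕ) (s : ℝ) (hs : 0 < s)
    (hsin : Real.sin s ≠ 0) (hK : (np : ℝ) * (Real.cos s / Real.sin s)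
        + (nm : ℝ) * (Real.cosh s / Real.sinh s) = 0) :
    InEigenspaceB np nm (s ^ 2) (fun j x => Complex.sinh (edgeMu np s j * (1 - x)) /
      Complex.sinh (edgeMu np s j)) := by
  have hsh : ∀ j, Complex.sinh (edgeMu np s j) ≠ 0 := by
    intro j; unfold edgeMu; split_ifs
    · rw [Complex.sinh_mul_I]
      exact mul_ne_zero (by exact_mod_cast hsin) Complex.I_ne_zero
    · have := (Real.sinh_pos_iff.2 hs).ne'
      exact_mod_cast this
  have d1 : ∀ μ : ℂ, deriv (fun x : ℝ => Complex.sinh (μ * (1 - x)) / Complex.sinh μ) =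
      fun x : ℝ => -μ * Complex.cosh (μ * (1 - x)) / Complex.sinh μ :=
    fun μ => funext fun x => (aux_hasDeriv μ x).deriv
  have d2 := fun (μ : ℂ) (x : ℝ) => (aux_hasDeriv2 μ x).deriv
  refine ⟨?_, ?_, ?_, ?_, ?_, ?_⟩
  · intro j
    have : ContDiff ℝ 2 (fun x : ℝ => (x : ℂ)) := Complex.ofRealCLM.contDiff
    exact (((Complex.contDiff_sinh (n := 2)).restrict_scalars ℝ).comp
      (contDiff_const.mul (contDiff_const.sub this))).div_const _
  · intro j h x
    simp only [d1, d2]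
    congr 1
    rw [edgeMu, if_pos h, mul_pow, Complex.I_sq]; push_cast; ring
  · intro j h x
    simp only [d1, d2]
    congr 1
    rw [edgeMu, if_neg (not_lt.2 h)]; push_cast; ring
  · intro j; simp
  · intro j k; simp [hsh]
  · simp only [d1]
    have := aux_sum np nm s
    rw [hK, Complex.ofReal_zero, mul_zero] at this
    rw [← neg_eq_zero, ← this, ← Finset.sum_neg_distrib]
    refine Finset.sum_congr rfl fun j _ => ?_
    simp only [Complex.ofReal_zero, sub_zero, mul_one]
    ring

/-- For `λ > 0` with `sin √λ ≠ 0`: if `n₊ cot √λ + n₋ coth √λ = 0` then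
`dim E_B(λ) = 1`, and otherwise `E_B(λ) = {0}`. -/
theorem stmt_9 (np nm : ℕ) (hp : 1 ≤ np) (hm : 1 ≤ nm) (lam : ℝ) (hlam : 0 < lam)
    (hsin : Real.sin (Real.sqrt lam) ≠ 0) :
    ((np : ℝ) * (Real.cos (Real.sqrt lam) / Real.sin (Real.sqrt lam))
        + (nm : ℝ) * (Real.cosh (Real.sqrt lam) / Real.sinh (Real.sqrt lam)) = 0 →
      ∃ f : Fin (np + nm) → ℝ → ℂ, InEigenspaceB np nm lam f ∧ f ≠ 0 ∧
        ∀ g : Fin (np + nm) → ℝ → ℂ, InEigenspaceB np nm lam g → ∃ c : ℂ, g = c • f) ∧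
    ((np : ℝ) * (Real.cos (Real.sqrt lam) / Real.sin (Real.sqrt lam))
        + (nm : ℝ) * (Real.cosh (Real.sqrt lam) / Real.sinh (Real.sqrt lam)) ≠ 0 →
      ∀ f : Fin (np + nm) → ℝ → ℂ, InEigenspaceB np nm lam f → f = 0) := by
  have hs : 0 < Real.sqrt lam := Real.sqrt_pos.2 hlam
  have hl : lam = Real.sqrt lam ^ 2 := (Real.sq_sqrt hlam.le).symm
  generalize Real.sqrt lam = s at *
  subst hl
  constructor
  · intro hK
    have hE := aux_exists np nm s hs hsin hK
    refine ⟨_, hE, ?_, ?_⟩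
    · intro h
      have h2 := congrFun (congrFun h ⟨np, by omega⟩) 0
      have := (Real.sinh_pos_iff.2 hs).ne'
      have h3 : Complex.sinh (s : ℂ) ≠ 0 := by exact_mod_cast this
      simp [edgeMu, h3] at h2
    · intro g hg
      obtain ⟨c, hc, -⟩ := aux_main np nm hp s hs hsin g hg
      exact ⟨c, funext fun j => funext fun x => hc j x⟩
  · intro hK f hf
    obtain ⟨c, hc, h0⟩ := aux_main np nm hp s hs hsin f hf
    have hc0 : c = 0 := (mul_eq_zero.1 h0).resolve_right (by exact_mod_cast hK)
    funext j x
    rw [hc j x, hc0, zero_mul]; rfl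
end

section
/- Fix integers n₊ ≥ 1 and n₋ ≥ 1 and set n = n₊ + n₋. For every positive integer k, the space E_B((kπ)²) consists exactly of the tuples f with f_j(x) = c_j·sin(kπx) for 1 ≤ j ≤ n₊, where c₁, …, c_{n₊} ∈ ℂ satisfy ∑_{j=1}^{n₊} c_j = 0, and f_j = 0 for n₊+1 ≤ j ≤ n; in particular dim E_B((kπ)²) = n₊ − 1. -/
lemma exp_ode (u : ℝ → ℂ) (μ : ℂ) (hu : ∀ x, HasDerivAt u (μ * u x) x) (x : ℝ) :
    u x = u 0 * Complex.exp (μ * x) := by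
  have h1 : ∀ x : ℝ, HasDerivAt (fun y : ℝ => u y * Complex.exp (-(μ * y))) 0 x := by
    intro x
    have h2 : HasDerivAt (fun y : ℝ => -(μ * (y : ℂ))) (-(μ * 1)) x :=
      (((hasDerivAt_id x).ofReal_comp).const_mul μ).neg
    have h3 := (hu x).mul h2.cexp
    exact h3.congr_deriv (by ring)
  have h4 := is_const_of_deriv_eq_zero (fun x => (h1 x).differentiableAt)
    (fun x => (h1 x).deriv) x 0
  simp only [Complex.ofReal_zero, mul_zero, neg_zero, Complex.exp_zero, mul_one] at h4
  rw [← h4, mul_assoc, ← Complex.exp_add]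
  simp

lemma ode2 (g : ℝ → ℂ) (μ : ℂ) (hμ : μ ≠ 0) (hg : ContDiff ℝ 2 g)
    (h : ∀ x, deriv (deriv g) x = μ ^ 2 * g x) :
    ∃ A B : ℂ, ∀ x : ℝ, g x = A * Complex.exp (μ * x) + B * Complex.exp (-(μ * x)) := by
  have d1 : ∀ x, HasDerivAt g (deriv g x) x := fun x =>
    (hg.differentiable (by norm_num) x).hasDerivAt
  have hg' : ContDiff ℝ 1 (deriv g) := by
    have : ContDiff ℝ (1 + 1) g := by simpa [one_add_one_eq_two] using hg
    exact (contDiff_succ_iff_deriv.1 this).2.2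
  have d2 : ∀ x, HasDerivAt (deriv g) (μ ^ 2 * g x) x := fun x => by
    rw [← h x]; exact (hg'.differentiable (by norm_num) x).hasDerivAt
  have hu := exp_ode (fun x => deriv g x + μ * g x) μ (fun x => by
    exact ((d2 x).add ((d1 x).const_mul μ)).congr_deriv (by ring))
  have hv := exp_ode (fun x => deriv g x - μ * g x) (-μ) (fun x => by
    exact ((d2 x).sub ((d1 x).const_mul μ)).congr_deriv (by ring))
  refine ⟨(deriv g 0 + μ * g 0) / (2 * μ), -(deriv g 0 - μ * g 0) / (2 * μ), fun x => ?_⟩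
  have e1 := hu x
  have e2 := hv x
  simp only [neg_mul] at e1 e2
  field_simp
  linear_combination e1 - e2

lemma dsin (w : ℝ) (c : ℂ) (x : ℝ) :
    HasDerivAt (fun x : ℝ => c * Complex.sin ((w * x : ℝ) : ℂ))
      (c * (w * Complex.cos ((w * x : ℝ) : ℂ))) x := by
  have h2 : HasDerivAt (fun y : ℝ => ((w * y : ℝ) : ℂ)) ((w * 1 : ℝ) : ℂ) x :=
    ((hasDerivAt_id x).const_mul w).ofReal_comp
  exact (((Complex.hasDerivAt_sin _).comp x h2).const_mul c).congr_deriv (by push_cast; ring)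

lemma dcos (w : ℝ) (c : ℂ) (x : ℝ) :
    HasDerivAt (fun x : ℝ => c * (w * Complex.cos ((w * x : ℝ) : ℂ)))
      (-((w ^ 2 : ℝ) : ℂ) * (c * Complex.sin ((w * x : ℝ) : ℂ))) x := by
  have h2 : HasDerivAt (fun y : ℝ => ((w * y : ℝ) : ℂ)) ((w * 1 : ℝ) : ℂ) x :=
    ((hasDerivAt_id x).const_mul w).ofReal_comp
  exact ((((Complex.hasDerivAt_cos _).comp x h2).const_mul (w : ℂ)).const_mul c).congr_deriv
    (by push_cast; ring)

lemma part1 (np nm : ℕ) (hp : 1 ≤ np) (k : ℕ) (hk : 0 < k)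
    (f : Fin (np + nm) → ℝ → ℂ) :
      InEigenspaceB np nm (((k : ℝ) * Real.pi) ^ 2) f ↔
        ∃ c : Fin (np + nm) → ℂ,
          (∑ j ∈ Finset.univ.filter (fun j : Fin (np + nm) => (j : ℕ) < np), c j) = 0 ∧
          (∀ j : Fin (np + nm), (j : ℕ) < np →
            f j = fun x : ℝ => c j * Complex.sin (((k : ℝ) * Real.pi * x : ℝ) : ℂ)) ∧
          (∀ j : Fin (np + nm), np ≤ (j : ℕ) → f j = 0) := by
  have hs1 : Complex.sin (((k : ℝ) * Real.pi * 1 : ℝ) : ℂ) = 0 := by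
    rw [← Complex.ofReal_sin]; simp [Real.sin_nat_mul_pi]
  have hw0 : (0 : ℝ) < (k : ℝ) * Real.pi := by positivity
  generalize hw : (k : ℝ) * Real.pi = w at *
  have hwc : (w : ℂ) ≠ 0 := by exact_mod_cast hw0.ne'
  have key : ∀ (c : Fin (np + nm) → ℂ),
      (∀ j : Fin (np + nm), (j : ℕ) < np →
        f j = fun x : ℝ => c j * Complex.sin ((w * x : ℝ) : ℂ)) →
      (∀ j : Fin (np + nm), np ≤ (j : ℕ) → f j = 0) →
      ∑ j : Fin (np + nm), deriv (f j) 0 =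
        w * ∑ j ∈ Finset.univ.filter (fun j : Fin (np + nm) => (j : ℕ) < np), c j := by
    intro c h1 h2
    rw [Finset.sum_filter, Finset.mul_sum]
    refine Finset.sum_congr rfl fun j _ => ?_
    split_ifs with hj
    · rw [h1 j hj, (dsin w (c j) 0).deriv]
      simp; ring
    · rw [h2 j (not_lt.1 hj)]
      simp
  constructor
  · rintro ⟨hC, hP, hN, hD, hcont, hK⟩
    have hpos : ∀ j : Fin (np + nm), (j : ℕ) < np → ∃ c : ℂ,
        f j = fun x : ℝ => c * Complex.sin ((w * x : ℝ) : ℂ) := by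
      intro j hj
      obtain ⟨A, B, hAB⟩ := ode2 (f j) (w * Complex.I) (by simp [hwc]) (hC j) (fun x => by
        rw [hP j hj x, mul_pow, Complex.I_sq]; push_cast; ring)
      have hcs : ∀ x : ℝ, f j x = (A + B) * Complex.cos ((w * x : ℝ) : ℂ)
          + ((A - B) * Complex.I) * Complex.sin ((w * x : ℝ) : ℂ) := by
        intro x
        rw [hAB x]
        have e1 : (w : ℂ) * Complex.I * x = ((w * x : ℝ) : ℂ) * Complex.I := by
          push_cast; ring
        rw [e1, Complex.exp_mul_I, ← neg_mul, Complex.exp_mul_I, Complex.cos_neg,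
          Complex.sin_neg]
        ring
      have h1 := hcs 1
      rw [hD j, hs1] at h1
      have hc1 : Complex.cos ((w * 1 : ℝ) : ℂ) ≠ 0 := by
        intro h0
        have := Complex.sin_sq_add_cos_sq ((w * 1 : ℝ) : ℂ)
        rw [hs1, h0] at this
        norm_num at this
      have hz : A + B = 0 := by
        rcases mul_eq_zero.1 (show (A + B) * Complex.cos ((w * 1 : ℝ) : ℂ) = 0 by
          linear_combination -h1) with h | h
        · exact h
        · exact absurd h hc1
      refine ⟨(A - B) * Complex.I, funext fun x => ?_⟩
      rw [hcs x, hz]; ring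
    have h00 : ∀ j, f j 0 = 0 := by
      intro j
      obtain ⟨c, hc⟩ := hpos ⟨0, by omega⟩ (by simp; omega)
      rw [hcont j ⟨0, by omega⟩, hc]
      simp
    have hneg : ∀ j : Fin (np + nm), np ≤ (j : ℕ) → f j = 0 := by
      intro j hj
      obtain ⟨A, B, hAB⟩ := ode2 (f j) w hwc (hC j) (fun x => by
        rw [hN j hj x]; push_cast; ring)
      have a0 := hAB 0
      have a1 := hAB 1
      rw [h00 j] at a0
      rw [hD j] at a1
      simp only [Complex.ofReal_zero, mul_zero, neg_zero, Complex.exp_zero, mul_one,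
        Complex.ofReal_one] at a0 a1
      have hB : B = -A := by linear_combination -a0
      have hne : Complex.exp (w : ℂ) - Complex.exp (-(w : ℂ)) ≠ 0 := by
        have : Real.exp (-w) < Real.exp w := Real.exp_lt_exp.2 (by linarith)
        rw [sub_ne_zero]
        exact_mod_cast this.ne'
      have hA : A = 0 := by
        rcases mul_eq_zero.1 (show A * (Complex.exp (w : ℂ) - Complex.exp (-(w : ℂ))) = 0 by
          rw [hB] at a1; linear_combination -a1) with h | h
        · exact h
        · exact absurd h hne
      funext x
      rw [hAB x, hB, hA]; simp
    choose! c hc using hpos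
    refine ⟨c, ?_, hc, hneg⟩
    have := key c hc hneg
    rw [hK] at this
    exact (mul_eq_zero.1 this.symm).resolve_left hwc
  · rintro ⟨c, hc, h1, h2⟩
    refine ⟨?_, ?_, ?_, ?_, ?_, ?_⟩
    · intro j
      rcases lt_or_ge (j : ℕ) np with hj | hj
      · rw [h1 j hj]
        have : ContDiff ℝ 2 (fun x : ℝ => ((Real.sin (w * x) : ℝ) : ℂ)) :=
          
          Complex.ofRealCLM.contDiff.comp
            (Real.contDiff_sin.comp (contDiff_const.mul contDiff_id))
        simp only [← Complex.ofReal_sin]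
        exact contDiff_const.mul this
      · rw [h2 j hj]; exact contDiff_const
    · intro j hj x
      rw [h1 j hj]
      have : deriv (fun x : ℝ => c j * Complex.sin ((w * x : ℝ) : ℂ)) = _ :=
        funext fun y => (dsin w (c j) y).deriv
      rw [this, (dcos w (c j) x).deriv]
    · intro j hj x
      rw [h2 j hj]
      have : deriv (0 : ℝ → ℂ) = 0 := by funext y; simp
      simp [this]
    · intro j
      rcases lt_or_ge (j : ℕ) np with hj | hj
      · rw [h1 j hj]; simp only [hs1, mul_zero]
      · rw [h2 j hj]; rfl
    · have : ∀ j, f j 0 = 0 := by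
        intro j
        rcases lt_or_ge (j : ℕ) np with hj | hj
        · rw [h1 j hj]; simp
        · rw [h2 j hj]; rfl
      intro j k
      rw [this, this]
    · rw [key c h1 h2, hc, mul_zero]

lemma sum_filt (m nm : ℕ) (c : Fin (m + 1 + nm) → ℂ) :
    (∑ j ∈ Finset.univ.filter (fun j : Fin (m + 1 + nm) => (j : ℕ) < m + 1), c j) =
      (∑ i : Fin m, c (Fin.castAdd nm i.castSucc)) + c (Fin.castAdd nm (Fin.last m)) := by
  rw [Finset.sum_filter, Fin.sum_univ_add, Fin.sum_univ_castSucc]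
  simp only [Fin.val_castAdd, Fin.val_natAdd, Fin.is_lt, if_true]
  rw [Finset.sum_eq_zero (s := (Finset.univ : Finset (Fin nm))), add_zero]
  intro i _
  rw [if_neg (by omega)]

/-- `E_B((kπ)²)` consists exactly of the tuples `f` with `fⱼ(x) = cⱼ sin(kπx)` on the
first `n₊` edges, `∑_{j < n₊} cⱼ = 0`, and `fⱼ = 0` on the last `n₋` edges; in particular
`dim E_B((kπ)²) = n₊ − 1` (expressed via a basis indexed by `Fin (n₊ − 1)`). -/
theorem stmt_10 (np nm : ℕ) (hp : 1 ≤ np) (hm : 1 ≤ nm) (k : ℕ) (hk : 0 < k) :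
    (∀ f : Fin (np + nm) → ℝ → ℂ,
      InEigenspaceB np nm (((k : ℝ) * Real.pi) ^ 2) f ↔
        ∃ c : Fin (np + nm) → ℂ,
          (∑ j ∈ Finset.univ.filter (fun j : Fin (np + nm) => (j : ℕ) < np), c j) = 0 ∧
          (∀ j : Fin (np + nm), (j : ℕ) < np →
            f j = fun x : ℝ => c j * Complex.sin (((k : ℝ) * Real.pi * x : ℝ) : ℂ)) ∧
          (∀ j : Fin (np + nm), np ≤ (j : ℕ) → f j = 0)) ∧
    (∃ b : Fin (np - 1) → (Fin (np + nm) → ℝ → ℂ),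
      (∀ i, InEigenspaceB np nm (((k : ℝ) * Real.pi) ^ 2) (b i)) ∧
      LinearIndependent ℂ b ∧
      (∀ f, InEigenspaceB np nm (((k : ℝ) * Real.pi) ^ 2) f →
        ∃ a : Fin (np - 1) → ℂ, f = ∑ i : Fin (np - 1), a i • b i)) := by
  refine ⟨part1 np nm hp k hk, ?_⟩
  obtain ⟨m, rfl⟩ : ∃ m, np = m + 1 := ⟨np - 1, by omega⟩
  change ∃ b : Fin m → (Fin (m + 1 + nm) → ℝ → ℂ), _ ∧ _ ∧ ∀ f, _ →
    ∃ a : Fin m → ℂ, f = ∑ i : Fin m, a i • b i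
  let C : Fin m → Fin (m + 1 + nm) → ℂ := fun i j =>
    if (j : ℕ) = i then 1 else if (j : ℕ) = m then -1 else 0
  have hC1 : ∀ i i' : Fin m, C i (Fin.castAdd nm i'.castSucc) = if i = i' then 1 else 0 := by
    intro i i'
    have := i'.2
    simp only [C, Fin.val_castAdd, Fin.val_castSucc, Fin.ext_iff]
    split_ifs <;> first | rfl | omega
  have hC2 : ∀ i : Fin m, C i (Fin.castAdd nm (Fin.last m)) = -1 := by
    intro i
    have := i.2
    simp only [C, Fin.val_castAdd, Fin.val_last]
    split_ifs <;> first | rfl | omega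
  have hC3 : ∀ (i : Fin m) (j : Fin (m + 1 + nm)), m + 1 ≤ (j : ℕ) → C i j = 0 := by
    intro i j hj
    have := i.2
    simp only [C]
    split_ifs <;> first | rfl | omega
  refine ⟨fun i j x => C i j * Complex.sin (((k : ℝ) * Real.pi * x : ℝ) : ℂ), ?_, ?_, ?_⟩
  · intro i
    rw [part1 (m + 1) nm hp k hk]
    refine ⟨C i, ?_, fun j _ => rfl, fun j hj => ?_⟩
    · rw [sum_filt]
      simp [hC1, hC2]
    · funext x
      simp [hC3 i j hj]
  · rw [Fintype.linearIndependent_iff]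
    intro g hg i
    have h := congrFun (congrFun hg (Fin.castAdd nm i.castSucc)) (1 / (2 * k))
    have hk' : (k : ℝ) ≠ 0 := by positivity
    have e : (k : ℝ) * Real.pi * (1 / (2 * k)) = Real.pi / 2 := by field_simp
    simp only [Finset.sum_apply, Pi.smul_apply, hC1, e, ← Complex.ofReal_sin,
      Real.sin_pi_div_two] at h
    simpa using h
  · intro f hf
    obtain ⟨c, hc, h1, h2⟩ := (part1 (m + 1) nm hp k hk f).1 hf
    rw [sum_filt] at hc
    refine ⟨fun i => c (Fin.castAdd nm i.castSucc), ?_⟩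
    funext j x
    simp only [Finset.sum_apply, Pi.smul_apply, smul_eq_mul]
    simp only [← mul_assoc, ← Finset.sum_mul]
    rcases lt_or_ge (j : ℕ) (m + 1) with hj | hj
    · rw [h1 j hj]
      beta_reduce
      obtain ⟨j', rfl⟩ : ∃ j' : Fin (m + 1), j = Fin.castAdd nm j' := ⟨⟨j, hj⟩, rfl⟩
      induction j' using Fin.lastCases with
      | last => simp only [hC2, mul_neg, mul_one, Finset.sum_neg_distrib]; 
                linear_combination hc * Complex.sin (((k : ℝ) * Real.pi * x : ℝ) : ℂ)
      | cast i => simp [hC1]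
    · rw [h2 j hj]
      simp [hC3 _ j hj]
end

section
/- Fix integers n₊ ≥ 1 and n₋ ≥ 1 and set n = n₊ + n₋. For every positive integer k, the space E_B(−(kπ)²) consists exactly of the tuples f with f_j = 0 for 1 ≤ j ≤ n₊ and f_j(x) = c_j·sin(kπx) for n₊+1 ≤ j ≤ n, where the c_j ∈ ℂ satisfy ∑_{j=n₊+1}^{n} c_j = 0; in particular dim E_B(−(kπ)²) = n₋ − 1. -/
lemma ode_aux (μ : ℂ) (f : ℝ → ℂ) (hf : ContDiff ℝ 2 f)
    (h : ∀ x, deriv (deriv f) x = μ ^ 2 * f x) (x : ℝ) :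
    deriv f x + μ * f x = (deriv f 0 + μ * f 0) * Complex.exp (μ * x) := by
  have hf1 : Differentiable ℝ f := hf.differentiable (by norm_num)
  have hf2 : Differentiable ℝ (deriv f) := by
    have : ContDiff ℝ 1 (deriv f) := by
      have h2 : ContDiff ℝ (1 + 1) f := by norm_num; exact hf
      exact (contDiff_succ_iff_deriv.1 h2).2.2
    exact this.differentiable (by norm_num)
  have he : ∀ x : ℝ, HasDerivAt (fun x : ℝ => Complex.exp (-μ * x))
      (Complex.exp (-μ * x) * (-μ * 1)) x := fun x =>
    ((Complex.ofRealCLM.hasDerivAt (x := x)).const_mul (-μ)).cexp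
  have hg : ∀ x : ℝ, HasDerivAt (fun x : ℝ => (deriv f x + μ * f x) * Complex.exp (-μ * x))
      0 x := by
    intro x
    have := (((hf2 x).hasDerivAt).add (((hf1 x).hasDerivAt).const_mul μ)).mul (he x)
    refine this.congr_deriv ?_
    rw [h x]
    simp only [Pi.add_apply]
    ring
  have hc := is_const_of_deriv_eq_zero (fun x => (hg x).differentiableAt)
    (fun x => (hg x).deriv) x 0
  simp only [Complex.ofReal_zero, mul_zero, Complex.exp_zero, mul_one] at hc
  rw [← hc, mul_assoc, ← Complex.exp_add]
  simp

lemma ode_sol (μ : ℂ) (f : ℝ → ℂ) (hf : ContDiff ℝ 2 f)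
    (h : ∀ x, deriv (deriv f) x = μ ^ 2 * f x) (x : ℝ) :
    2 * μ * f x = (deriv f 0 + μ * f 0) * Complex.exp (μ * x)
      - (deriv f 0 - μ * f 0) * Complex.exp (-(μ * x)) := by
  have h1 := ode_aux μ f hf h x
  have h2 := ode_aux (-μ) f hf (by simpa using h) x
  rw [neg_mul μ (x:ℂ)] at h2
  linear_combination h1 - h2

lemma hyp_zero (w : ℝ) (hw : 0 < w) (f : ℝ → ℂ) (hf : ContDiff ℝ 2 f)
    (h : ∀ x, deriv (deriv f) x = (w : ℂ) ^ 2 * f x) (h0 : f 0 = 0) (h1 : f 1 = 0) :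
    f = 0 := by
  have hw' : (w : ℂ) ≠ 0 := by exact_mod_cast hw.ne'
  have key := ode_sol w f hf h
  have e1 := key 1
  rw [h0, h1] at e1
  have hne : Complex.exp ((w : ℂ) * (1 : ℝ)) - Complex.exp (-((w : ℂ) * (1 : ℝ))) ≠ 0 := by
    have : Real.exp (-w) < Real.exp w := Real.exp_lt_exp.2 (by linarith)
    have h3 : Real.exp w - Real.exp (-w) ≠ 0 := by linarith
    simp only [Complex.ofReal_one, mul_one]
    exact_mod_cast h3
  have hd : deriv f 0 = 0 := by
    have : deriv f 0 * (Complex.exp ((w : ℂ) * (1 : ℝ)) - Complex.exp (-((w : ℂ) * (1 : ℝ)))) = 0 := by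
      linear_combination -e1
    exact (mul_eq_zero.1 this).resolve_right hne
  funext x
  have := key x
  rw [h0, hd] at this
  simpa [hw'] using this

lemma trig_sol (k : ℕ) (hk : 0 < k) (f : ℝ → ℂ) (hf : ContDiff ℝ 2 f)
    (h : ∀ x, deriv (deriv f) x = -(((k : ℝ) * Real.pi : ℝ) : ℂ) ^ 2 * f x) (h1 : f 1 = 0) :
    f 0 = 0 ∧ f = fun x : ℝ => (deriv f 0 / (((k : ℝ) * Real.pi : ℝ) : ℂ)) *
      Complex.sin (((k : ℝ) * Real.pi * x : ℝ) : ℂ) := by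
  have hw : 0 < (k : ℝ) * Real.pi := by positivity
  have hs : Complex.sin (((k : ℝ) * Real.pi : ℝ) : ℂ) = 0 := by
    rw [← Complex.ofReal_sin, Real.sin_nat_mul_pi]; simp
  have hcs : Complex.cos (((k : ℝ) * Real.pi : ℝ) : ℂ) ≠ 0 := by
    rw [← Complex.ofReal_cos, Real.cos_nat_mul_pi]; simp
  simp only [Complex.ofReal_mul _ (_ : ℝ)] at *
  rw [← Complex.ofReal_mul] at *
  generalize (k : ℝ) * Real.pi = w at *
  have hw' : (w : ℂ) ≠ 0 := by exact_mod_cast hw.ne'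
  have key : ∀ x : ℝ, w * f x = deriv f 0 * Complex.sin (w * x) + w * f 0 * Complex.cos (w * x) := by
    intro x
    have := ode_sol (w * Complex.I) f hf
      (by intro x; rw [h x, mul_pow, Complex.I_sq]; ring) x
    rw [show (w : ℂ) * Complex.I * x = (w * x) * Complex.I by ring,
      show -((w : ℂ) * x * Complex.I) = (-(w * x)) * Complex.I by ring,
      Complex.exp_mul_I, Complex.exp_mul_I, Complex.cos_neg, Complex.sin_neg] at this
    have h2I : (2 * Complex.I) ≠ 0 := by simp
    apply mul_left_cancel₀ h2I
    linear_combination this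
  have h0 : f 0 = 0 := by
    have := key 1
    simpa [h1, hs, hcs, hw'] using this
  refine ⟨h0, ?_⟩
  funext x
  have := key x
  rw [h0] at this
  field_simp
  linear_combination this

lemma sin_deriv (w : ℝ) (c : ℂ) :
    deriv (fun x : ℝ => c * Complex.sin ((w * x : ℝ) : ℂ))
      = fun x : ℝ => c * w * Complex.cos ((w * x : ℝ) : ℂ) := by
  funext x
  have h : HasDerivAt (fun x : ℝ => ((w * x : ℝ) : ℂ)) (w : ℂ) x := by
    simpa using (((hasDerivAt_id x).const_mul w).ofReal_comp)
  refine ((HasDerivAt.comp x (Complex.hasDerivAt_sin _) h).const_mul c).deriv.trans ?_; ring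

lemma cos_deriv (w : ℝ) (c : ℂ) :
    deriv (fun x : ℝ => c * Complex.cos ((w * x : ℝ) : ℂ))
      = fun x : ℝ => -(c * w) * Complex.sin ((w * x : ℝ) : ℂ) := by
  funext x
  have h : HasDerivAt (fun x : ℝ => ((w * x : ℝ) : ℂ)) (w : ℂ) x := by
    simpa using (((hasDerivAt_id x).const_mul w).ofReal_comp)
  refine ((HasDerivAt.comp x (Complex.hasDerivAt_cos _) h).const_mul c).deriv.trans ?_; ring

lemma sum_filter_aux (np nm : ℕ) (c : Fin (np + nm) → ℂ) :
    (∑ j ∈ Finset.univ.filter (fun j : Fin (np + nm) => np ≤ (j : ℕ)), c j)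
      = ∑ i : Fin nm, c (Fin.natAdd np i) := by
  rw [Finset.sum_filter, Fin.sum_univ_add, Finset.sum_eq_zero, zero_add]
  · simp
  · intro i _
    have := i.isLt
    rw [if_neg]
    simp

lemma eig_iff (np nm : ℕ) (hp : 1 ≤ np) (hm : 1 ≤ nm) (k : ℕ) (hk : 0 < k)
    (f : Fin (np + nm) → ℝ → ℂ) :
      InEigenspaceB np nm (-(((k : ℝ) * Real.pi) ^ 2)) f ↔
        ∃ c : Fin (np + nm) → ℂ,
          (∑ j ∈ Finset.univ.filter (fun j : Fin (np + nm) => np ≤ (j : ℕ)), c j) = 0 ∧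
          (∀ j : Fin (np + nm), (j : ℕ) < np → f j = 0) ∧
          (∀ j : Fin (np + nm), np ≤ (j : ℕ) →
            f j = fun x : ℝ => c j * Complex.sin (((k : ℝ) * Real.pi * x : ℝ) : ℂ)) := by
  have hw : 0 < (k : ℝ) * Real.pi := by positivity
  have hw' : (((k : ℝ) * Real.pi : ℝ) : ℂ) ≠ 0 := by exact_mod_cast hw.ne'
  constructor
  · rintro ⟨hC, hpos, hneg, h1, h0, hK⟩
    have ht : ∀ j : Fin (np + nm), np ≤ (j : ℕ) → _ := fun j hj =>
      trig_sol k hk (f j) (hC j) (by intro x; rw [hneg j hj x]; push_cast; ring) (h1 j)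
    have hz : ∀ j, f j 0 = 0 := fun j => by
      rw [h0 j ⟨np, by omega⟩]
      exact (ht ⟨np, by omega⟩ le_rfl).1
    have hp0 : ∀ j : Fin (np + nm), (j : ℕ) < np → f j = 0 := fun j hj =>
      hyp_zero _ hw (f j) (hC j) (by intro x; rw [hpos j hj x]; push_cast; ring) (hz j) (h1 j)
    refine ⟨fun j => deriv (f j) 0 / (((k : ℝ) * Real.pi : ℝ) : ℂ), ?_, hp0,
      fun j hj => (ht j hj).2⟩
    rw [← Finset.sum_div, sum_filter_aux]
    rw [Fin.sum_univ_add] at hK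
    have : ∑ i : Fin np, deriv (f (Fin.castAdd nm i)) 0 = 0 :=
      Finset.sum_eq_zero fun i _ => by
        rw [hp0 _ (by simp)]; simp [Pi.zero_def]
    rw [this, zero_add] at hK
    rw [hK, zero_div]
  · rintro ⟨c, hc, hp0, hs⟩
    have hor : ∀ j : Fin (np + nm), (j : ℕ) < np ∨ np ≤ (j : ℕ) := fun j => lt_or_ge _ _
    refine ⟨fun j => ?_, fun j hj x => ?_, fun j hj x => ?_, fun j => ?_, ?_, ?_⟩
    · rcases hor j with hj | hj
      · rw [hp0 j hj]; exact contDiff_const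
      · rw [hs j hj]
        have : ContDiff ℝ 2 (fun x : ℝ => (((k : ℝ) * Real.pi * x : ℝ) : ℂ)) :=
          Complex.ofRealCLM.contDiff.comp (contDiff_const.mul contDiff_id)
        exact contDiff_const.mul ((Complex.contDiff_sin.restrict_scalars ℝ).comp this)
    · rw [hp0 j hj]; simp [Pi.zero_def]
    · rw [hs j hj, sin_deriv, cos_deriv]; push_cast; ring
    · rcases hor j with hj | hj
      · rw [hp0 j hj]; rfl
      · rw [hs j hj]
        simp only [mul_one]
        rw [← Complex.ofReal_sin, Real.sin_nat_mul_pi]; simp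
    · have : ∀ j, f j 0 = 0 := fun j => by
        rcases hor j with hj | hj
        · rw [hp0 j hj]; rfl
        · rw [hs j hj]; simp
      intro j l; rw [this, this]
    · rw [Fin.sum_univ_add, Finset.sum_eq_zero, zero_add]
      · rw [sum_filter_aux] at hc
        have : ∀ i : Fin nm, deriv (f (Fin.natAdd np i)) 0
            = c (Fin.natAdd np i) * (((k : ℝ) * Real.pi : ℝ) : ℂ) := fun i => by
          rw [hs _ (by simp), sin_deriv]; simp
        simp only [this]
        rw [← Finset.sum_mul, hc, zero_mul]
      · intro i _
        rw [hp0 _ (by simp)]; simp [Pi.zero_def]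

/-- coefficient vectors of the basis -/
noncomputable def dco (np m : ℕ) (i : Fin m) : Fin (np + (m + 1)) → ℂ :=
  Fin.addCases (fun _ => 0) (Fin.lastCases (-1) (fun l => if l = i then 1 else 0))

lemma dco_left (np m : ℕ) (i : Fin m) (j : Fin np) : dco np m i (Fin.castAdd _ j) = 0 := by
  simp [dco]

lemma dco_mid (np m : ℕ) (i l : Fin m) :
    dco np m i (Fin.natAdd np l.castSucc) = if l = i then 1 else 0 := by
  simp [dco]

lemma dco_last (np m : ℕ) (i : Fin m) :
    dco np m i (Fin.natAdd np (Fin.last m)) = -1 := by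
  unfold dco
  rw [Fin.addCases_right, Fin.lastCases_last]

lemma basis_aux (np m : ℕ) (hp : 1 ≤ np) (k : ℕ) (hk : 0 < k) :
    ∃ b : Fin m → (Fin (np + (m + 1)) → ℝ → ℂ),
      (∀ i, InEigenspaceB np (m + 1) (-(((k : ℝ) * Real.pi) ^ 2)) (b i)) ∧
      LinearIndependent ℂ b ∧
      (∀ f, InEigenspaceB np (m + 1) (-(((k : ℝ) * Real.pi) ^ 2)) f →
        ∃ a : Fin m → ℂ, f = ∑ i : Fin m, a i • b i) := by
  have hk' : (k : ℝ) ≠ 0 := by positivity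
  refine ⟨fun i j x => dco np m i j * Complex.sin (((k : ℝ) * Real.pi * x : ℝ) : ℂ), ?_, ?_, ?_⟩
  · intro i
    rw [eig_iff np (m + 1) hp (by omega) k hk]
    refine ⟨dco np m i, ?_, ?_, fun j _ => rfl⟩
    · rw [sum_filter_aux, Fin.sum_univ_castSucc]
      rw [dco_last]; simp [dco_mid]
    · intro j hj
      have : dco np m i j = 0 := dco_left np m i ⟨j, hj⟩
      funext x
      simp [this]
  · rw [Fintype.linearIndependent_iff]
    intro g hg i
    have h := congrFun (congrFun hg (Fin.natAdd np i.castSucc)) (1 / (2 * k))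
    have hx : (k : ℝ) * Real.pi * (1 / (2 * k)) = Real.pi / 2 := by field_simp
    simp only [Finset.sum_apply, Pi.smul_apply, hx, dco_mid, ← Complex.ofReal_sin,
      Real.sin_pi_div_two] at h
    simpa using h
  · intro f hf
    obtain ⟨c, hc, h0, hs⟩ := (eig_iff np (m + 1) hp (by omega) k hk f).1 hf
    rw [sum_filter_aux, Fin.sum_univ_castSucc] at hc
    refine ⟨fun i => c (Fin.natAdd np i.castSucc), ?_⟩
    funext j x
    simp only [Finset.sum_apply, Pi.smul_apply, smul_eq_mul]
    refine Fin.addCases (fun j => ?_) (fun j => ?_) j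
    · rw [h0 _ (by simp)]
      simp [dco_left]
    · rw [hs _ (by simp)]
      refine Fin.lastCases ?_ (fun l => ?_) j
      · simp only [dco_last]
        rw [← Finset.sum_mul]
        linear_combination Complex.sin (((k : ℝ) * Real.pi * x : ℝ) : ℂ) * hc
      · simp [dco_mid]

/-- `E_B(−(kπ)²)` consists exactly of the tuples `f` with `fⱼ = 0` on the first `n₊`
edges and `fⱼ(x) = cⱼ sin(kπx)` on the last `n₋` edges, where `∑_{j ≥ n₊} cⱼ = 0`; in
particular `dim E_B(−(kπ)²) = n₋ − 1` (expressed via a basis indexed by `Fin (n₋ − 1)`). -/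
theorem stmt_11 (np nm : ℕ) (hp : 1 ≤ np) (hm : 1 ≤ nm) (k : ℕ) (hk : 0 < k) :
    (∀ f : Fin (np + nm) → ℝ → ℂ,
      InEigenspaceB np nm (-(((k : ℝ) * Real.pi) ^ 2)) f ↔
        ∃ c : Fin (np + nm) → ℂ,
          (∑ j ∈ Finset.univ.filter (fun j : Fin (np + nm) => np ≤ (j : ℕ)), c j) = 0 ∧
          (∀ j : Fin (np + nm), (j : ℕ) < np → f j = 0) ∧
          (∀ j : Fin (np + nm), np ≤ (j : ℕ) →
            f j = fun x : ℝ => c j * Complex.sin (((k : ℝ) * Real.pi * x : ℝ) : ℂ))) ∧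
    (∃ b : Fin (nm - 1) → (Fin (np + nm) → ℝ → ℂ),
      (∀ i, InEigenspaceB np nm (-(((k : ℝ) * Real.pi) ^ 2)) (b i)) ∧
      LinearIndependent ℂ b ∧
      (∀ f, InEigenspaceB np nm (-(((k : ℝ) * Real.pi) ^ 2)) f →
        ∃ a : Fin (nm - 1) → ℂ, f = ∑ i : Fin (nm - 1), a i • b i)) := by
  refine ⟨eig_iff np nm hp hm k hk, ?_⟩
  obtain ⟨m, rfl⟩ : ∃ m, nm = m + 1 := ⟨nm - 1, by omega⟩
  exact basis_aux np m hp k hk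
end

section
/- Fix integers n₊ ≥ 1 and n₋ ≥ 1 and set n = n₊ + n₋. Let λ < 0 be such that sin √(−λ) ≠ 0 (i.e., λ ≠ −(kπ)² for every positive integer k). If n₋·cot √(−λ) + n₊·coth √(−λ) = 0 then dim E_B(λ) = 1, and if n₋·cot √(−λ) + n₊·coth √(−λ) ≠ 0 then E_B(λ) = {0}. -/
lemma sol_aux (a : ℂ) (ha : a ≠ 0) (f : ℝ → ℂ) (hf : ContDiff ℝ 2 f)
    (h : ∀ x, deriv (deriv f) x = a ^ 2 * f x) (x : ℝ) :
    f x = f 0 * Complex.cosh (a * x) + deriv f 0 / a * Complex.sinh (a * x) := by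
  have h1 : ∀ x, HasDerivAt f (deriv f x) x := fun x =>
    (hf.differentiable (by norm_num) x).hasDerivAt
  have h2 : ∀ x, HasDerivAt (deriv f) (a ^ 2 * f x) x := fun x => by
    rw [← h x]
    have : ContDiff ℝ 1 (deriv f) := by
      have h3 : ContDiff ℝ (1 + 1) f := by simpa [one_add_one_eq_two] using hf
      exact (contDiff_succ_iff_deriv.1 h3).2.2
    exact (this.differentiable (by norm_num) x).hasDerivAt
  have key : ∀ b : ℂ, b ^ 2 = a ^ 2 → ∀ x : ℝ,
      (deriv f x - b * f x) * Complex.exp (b * x) = deriv f 0 - b * f 0 := by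
    intro b hb x
    have he : ∀ x : ℝ, HasDerivAt (fun x : ℝ => Complex.exp (b * x))
        (Complex.exp (b * x) * (b * 1)) x := fun x =>
      ((Complex.ofRealCLM.hasDerivAt (x := x)).const_mul b).cexp
    have hd : ∀ x : ℝ, HasDerivAt
        (fun x : ℝ => (deriv f x - b * f x) * Complex.exp (b * x)) 0 x := by
      intro x
      have := ((h2 x).sub ((h1 x).const_mul b)).mul (he x)
      refine this.congr_deriv ?_
      simp only [Pi.sub_apply]
      rw [← hb]; ring
    have := is_const_of_deriv_eq_zero (fun x => (hd x).differentiableAt)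
      (fun x => (hd x).deriv) x 0
    simpa using this
  have k1 := key a rfl x
  have k2 := key (-a) (by ring) x
  have e : Complex.exp (a * x) * Complex.exp (-(a * x)) = 1 := by
    rw [← Complex.exp_add]; simp
  rw [Complex.cosh, Complex.sinh]
  rw [neg_mul a (x : ℂ)] at k2
  field_simp
  linear_combination Complex.exp (a * x) * k2 - Complex.exp (-(a * x)) * k1 - 2 * a * f x * e

/-- the basic solution -/
noncomputable def phiB (a : ℂ) (x : ℝ) : ℂ :=
  Complex.cosh (a * x) - Complex.cosh a / Complex.sinh a * Complex.sinh (a * x)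

lemma phiB_hd (a k l : ℂ) (x : ℝ) :
    HasDerivAt (fun x : ℝ => k * Complex.cosh (a * x) - l * Complex.sinh (a * x))
      ((-(l * a)) * Complex.cosh (a * x) - (-(k * a)) * Complex.sinh (a * x)) x := by
  have h0 : HasDerivAt (fun z : ℂ => a * z) (a * 1) (x : ℂ) := (hasDerivAt_id _).const_mul a
  refine ((h0.ccosh.const_mul k).sub (h0.csinh.const_mul l)).comp_ofReal.congr_deriv ?_
  ring

lemma phiB_eq (a : ℂ) : phiB a = fun x : ℝ => 1 * Complex.cosh (a * x) -
    (Complex.cosh a / Complex.sinh a) * Complex.sinh (a * x) := by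
  funext x; simp [phiB]

lemma phiB_deriv (a : ℂ) : deriv (phiB a) = fun x : ℝ =>
    (-((Complex.cosh a / Complex.sinh a) * a)) * Complex.cosh (a * x) -
      (-(1 * a)) * Complex.sinh (a * x) := by
  funext x; rw [phiB_eq]; exact (phiB_hd a _ _ x).deriv

lemma phiB_deriv2 (a : ℂ) (x : ℝ) : deriv (deriv (phiB a)) x = a ^ 2 * phiB a x := by
  rw [phiB_deriv, (phiB_hd a _ _ x).deriv, phiB]; ring

lemma phiB_contDiff (a : ℂ) : ContDiff ℝ 2 (phiB a) := by
  have h0 : ContDiff ℝ 2 (fun x : ℝ => a * (x : ℂ)) :=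
    contDiff_const.mul Complex.ofRealCLM.contDiff
  unfold phiB
  exact ((Complex.contDiff_cosh.restrict_scalars ℝ).comp h0).sub
    (contDiff_const.mul ((Complex.contDiff_sinh.restrict_scalars ℝ).comp h0))

lemma sol_phiB (a : ℂ) (ha : a ≠ 0) (hs : Complex.sinh a ≠ 0) (f : ℝ → ℂ)
    (hf : ContDiff ℝ 2 f)
    (h : ∀ x, deriv (deriv f) x = a ^ 2 * f x) (h1 : f 1 = 0) :
    f = fun x => f 0 * phiB a x := by
  funext x
  have e1 := sol_aux a ha f hf h 1
  rw [h1] at e1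
  rw [sol_aux a ha f hf h x, phiB]
  simp only [Complex.ofReal_one, mul_one] at e1
  have : deriv f 0 / a = - f 0 * (Complex.cosh a / Complex.sinh a) := by
    rw [← mul_div_assoc, eq_div_iff hs]
    linear_combination -e1
  rw [this]; ring

/-- For `λ < 0` with `sin √(−λ) ≠ 0`: if `n₋ cot √(−λ) + n₊ coth √(−λ) = 0` then
`dim E_B(λ) = 1`, and otherwise `E_B(λ) = {0}`. -/
theorem stmt_12 (np nm : ℕ) (hp : 1 ≤ np) (hm : 1 ≤ nm) (lam : ℝ) (hlam : lam < 0)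
    (hsin : Real.sin (Real.sqrt (-lam)) ≠ 0) :
    ((nm : ℝ) * (Real.cos (Real.sqrt (-lam)) / Real.sin (Real.sqrt (-lam)))
        + (np : ℝ) * (Real.cosh (Real.sqrt (-lam)) / Real.sinh (Real.sqrt (-lam))) = 0 →
      ∃ f : Fin (np + nm) → ℝ → ℂ, InEigenspaceB np nm lam f ∧ f ≠ 0 ∧
        ∀ g : Fin (np + nm) → ℝ → ℂ, InEigenspaceB np nm lam g → ∃ c : ℂ, g = c • f) ∧
    ((nm : ℝ) * (Real.cos (Real.sqrt (-lam)) / Real.sin (Real.sqrt (-lam)))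
        + (np : ℝ) * (Real.cosh (Real.sqrt (-lam)) / Real.sinh (Real.sqrt (-lam))) ≠ 0 →
      ∀ f : Fin (np + nm) → ℝ → ℂ, InEigenspaceB np nm lam f → f = 0) := by
  set s := Real.sqrt (-lam) with hsdef
  have hs0 : 0 < s := Real.sqrt_pos.2 (by linarith)
  have hs2 : (s : ℂ) ^ 2 = -(lam : ℂ) := by
    have : s ^ 2 = -lam := Real.sq_sqrt (by linarith)
    exact_mod_cast this
  have hsc : (s : ℂ) ≠ 0 := by exact_mod_cast hs0.ne'
  have hsh : Real.sinh s ≠ 0 := (Real.sinh_pos_iff.2 hs0).ne'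
  have hshc : Complex.sinh (s : ℂ) ≠ 0 := by exact_mod_cast hsh
  have hsinc : Complex.sin (s : ℂ) ≠ 0 := by exact_mod_cast hsin
  let a : Fin (np + nm) → ℂ := fun j => if (j : ℕ) < np then (s : ℂ) else s * Complex.I
  have ap : ∀ j : Fin (np + nm), (j : ℕ) < np → a j = s := fun j hj => if_pos hj
  have am : ∀ j : Fin (np + nm), np ≤ (j : ℕ) → a j = s * Complex.I :=
    fun j hj => if_neg (not_lt.2 hj)
  have ap2 : ∀ j : Fin (np + nm), (j : ℕ) < np → a j ^ 2 = -(lam : ℂ) := fun j hj => by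
    rw [ap j hj, hs2]
  have am2 : ∀ j : Fin (np + nm), np ≤ (j : ℕ) → a j ^ 2 = (lam : ℂ) := fun j hj => by
    rw [am j hj, mul_pow, hs2, Complex.I_sq]; ring
  have a0 : ∀ j, a j ≠ 0 := fun j => by
    rcases lt_or_ge (j : ℕ) np with hj | hj
    · rw [ap j hj]; exact hsc
    · rw [am j hj]; exact mul_ne_zero hsc Complex.I_ne_zero
  have ash : ∀ j, Complex.sinh (a j) ≠ 0 := fun j => by
    rcases lt_or_ge (j : ℕ) np with hj | hj
    · rw [ap j hj]; exact hshc
    · rw [am j hj, Complex.sinh_mul_I]; exact mul_ne_zero hsinc Complex.I_ne_zero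
  have phi0 : ∀ j, phiB (a j) 0 = 1 := fun j => by simp [phiB]
  have phi1 : ∀ j, phiB (a j) 1 = 0 := fun j => by
    simp [phiB, div_mul_cancel₀ _ (ash j)]
  have hsum : ∑ j, deriv (phiB (a j)) 0 = -(s : ℂ) *
      (((nm : ℝ) * (Real.cos s / Real.sin s) + (np : ℝ) * (Real.cosh s / Real.sinh s) : ℝ) : ℂ) := by
    rw [Fin.sum_univ_add]
    have e1 : ∀ i : Fin np, deriv (phiB (a (Fin.castAdd nm i))) 0
        = -(s : ℂ) * (Complex.cosh s / Complex.sinh s) := fun i => by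
      rw [ap _ (by simp), phiB_deriv]; simp; ring
    have e2 : ∀ i : Fin nm, deriv (phiB (a (Fin.natAdd np i))) 0
        = -(s : ℂ) * (Complex.cos s / Complex.sin s) := fun i => by
      rw [am _ (by simp), phiB_deriv]
      simp only [Complex.sinh_mul_I, Complex.cosh_mul_I]
      have := Complex.I_ne_zero
      simp
      field_simp
    simp only [e1, e2, Finset.sum_const, Finset.card_univ, Fintype.card_fin, nsmul_eq_mul]
    push_cast
    ring
  let j0 : Fin (np + nm) := ⟨0, by omega⟩
  have rep : ∀ g : Fin (np + nm) → ℝ → ℂ, InEigenspaceB np nm lam g →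
      ∀ j, g j = fun x => g j0 0 * phiB (a j) x := by
    rintro g ⟨hc, hgp, hgm, hg1, hg0, -⟩ j
    rw [hg0 j0 j]
    refine sol_phiB (a j) (a0 j) (ash j) (g j) (hc j) (fun x => ?_) (hg1 j)
    rcases lt_or_ge (j : ℕ) np with hj | hj
    · rw [ap2 j hj, hgp j hj]
    · rw [am2 j hj, hgm j hj]
  constructor
  · intro h0
    refine ⟨fun j => phiB (a j), ⟨fun j => phiB_contDiff _, fun j hj x => ?_, fun j hj x => ?_,
      phi1, fun j k => (phi0 j).trans (phi0 k).symm, ?_⟩, fun h => ?_, fun g hg => ⟨g j0 0, ?_⟩⟩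
    · rw [phiB_deriv2, ap2 j hj]
    · rw [phiB_deriv2, am2 j hj]
    · rw [hsum, h0]; simp
    · have := congrFun (congrFun h j0) 0
      simp [phi0] at this
    · funext j x
      rw [rep g hg j]; rfl
  · intro h0 g hg
    have r := rep g hg
    have hk := hg.2.2.2.2.2
    have hd : ∀ j, deriv (g j) 0 = g j0 0 * deriv (phiB (a j)) 0 := fun j => by
      conv_lhs => rw [r j]
      exact deriv_const_mul_field _
    simp only [hd] at hk
    rw [← Finset.mul_sum, hsum] at hk
    have h0c := Complex.ofReal_ne_zero.2 h0
    have hz : g j0 0 = 0 := by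
      rcases mul_eq_zero.1 hk with h | h
      · exact h
      · exact absurd h (mul_ne_zero (neg_ne_zero.2 hsc) h0c)
    funext j x
    rw [r j, hz]; simp
end

section
/- Fix integers n₊ ≥ 1 and n₋ ≥ 1, and for each integer k ≥ 1 let μ_k denote the unique solution of n₊·cot μ + n₋·coth μ = 0 in the interval ((k−1)π, kπ). Then μ_k − ( kπ − arctan(n₊/n₋) ) → 0 as k → ∞; equivalently, the positive eigenvalues η_k = μ_k² of the indefinite Kirchhoff Laplacian satisfy η_k = ( kπ − arctan(n₊/n₋) )² + o(k) asymptotically in the sense that √η_k − kπ + arctan(n₊/n₋) → 0. -/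
open Filter

/-- Asymptotics of the positive eigenvalues: if `μ_k` is the solution of
`n₊ cot μ + n₋ coth μ = 0` in `((k−1)π, kπ)`, then
`μ_k − (kπ − arctan(n₊/n₋)) → 0` as `k → ∞`. -/
theorem stmt_14 (np nm : ℕ) (hp : 1 ≤ np) (hm : 1 ≤ nm) (μ : ℕ → ℝ)
    (hμmem : ∀ k : ℕ, 1 ≤ k →
      μ k ∈ Set.Ioo (((k : ℝ) - 1) * Real.pi) ((k : ℝ) * Real.pi))
    (hμeq : ∀ k : ℕ, 1 ≤ k →
      (np : ℝ) * (Real.cos (μ k) / Real.sin (μ k))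
        + (nm : ℝ) * (Real.cosh (μ k) / Real.sinh (μ k)) = 0) :
    Tendsto (fun k : ℕ => μ k - ((k : ℝ) * Real.pi - Real.arctan ((np : ℝ) / (nm : ℝ))))
      atTop (nhds 0) := by
  have hnp : (0:ℝ) < np := by exact_mod_cast hp
  have hnm : (0:ℝ) < nm := by exact_mod_cast hm
  have key : ∀ k : ℕ, 1 ≤ k →
      (k:ℝ) * Real.pi - μ k = Real.arctan ((np:ℝ) / nm * Real.tanh (μ k)) := by
    intro k hk
    obtain ⟨h1, h2⟩ := hμmem k hk
    have heq := hμeq k hk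
    have hk' : (1:ℝ) ≤ k := by exact_mod_cast hk
    have hpos : 0 < μ k :=
      lt_of_le_of_lt (mul_nonneg (by linarith) Real.pi_pos.le) h1
    have hsh : 0 < Real.sinh (μ k) := Real.sinh_pos_iff.mpr hpos
    have hch : 0 < Real.cosh (μ k) := Real.cosh_pos _
    have hq : 0 < (nm : ℝ) * (Real.cosh (μ k) / Real.sinh (μ k)) := by positivity
    have hs : Real.sin (μ k) ≠ 0 := by
      intro h; simp only [h, div_zero, zero_div, mul_zero, zero_add] at heq; linarith
    have hc : Real.cos (μ k) ≠ 0 := by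
      intro h; simp only [h, div_zero, zero_div, mul_zero, zero_add] at heq; linarith
    have htan : Real.tan (k * Real.pi - μ k) = (np:ℝ) / nm * Real.tanh (μ k) := by
      rw [Real.tan_nat_mul_pi_sub, Real.tan_eq_sin_div_cos, Real.tanh_eq_sinh_div_cosh]
      field_simp at heq ⊢
      linarith
    have htp : 0 < Real.tan (k * Real.pi - μ k) := by
      rw [htan, Real.tanh_eq_sinh_div_cosh]; positivity
    rw [← htan, Real.arctan_tan]
    · linarith [Real.pi_pos]
    · by_contra! hge
      have a1 : 0 ≤ Real.sin (k * Real.pi - μ k) :=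
        Real.sin_nonneg_of_nonneg_of_le_pi (by linarith) (by linarith)
      have a2 : Real.cos (k * Real.pi - μ k) ≤ 0 :=
        Real.cos_nonpos_of_pi_div_two_le_of_le hge (by linarith [Real.pi_pos])
      rw [Real.tan_eq_sin_div_cos] at htp
      linarith [div_nonpos_of_nonneg_of_nonpos a1 a2]
  have hμ : Tendsto μ atTop atTop := by
    have h0 : Tendsto (fun k : ℕ => ((k:ℝ) + (-1)) * Real.pi) atTop atTop :=
      (tendsto_atTop_add_const_right _ _ tendsto_natCast_atTop_atTop).atTop_mul_const
        Real.pi_pos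
    refine tendsto_atTop_mono' _ ?_ h0
    filter_upwards [eventually_ge_atTop 1] with k hk
    have := (hμmem k hk).1.le
    rwa [sub_eq_add_neg] at this
  have htanh : Tendsto (fun k => Real.tanh (μ k)) atTop (nhds 1) := by
    have h3 : ∀ x : ℝ, Real.tanh x = 1 - 2 / (Real.exp (2 * x) + 1) := by
      intro x
      have : Real.exp (2 * x) = Real.exp x * Real.exp x := by
        rw [← Real.exp_add]; ring_nf
      rw [Real.tanh_eq_sinh_div_cosh, Real.sinh_eq, Real.cosh_eq, this, Real.exp_neg]
      have := Real.exp_pos x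
      field_simp
      ring
    simp only [h3]
    have h4 : Tendsto (fun k => Real.exp (2 * μ k) + 1) atTop atTop :=
      tendsto_atTop_add_const_right _ _
        (Real.tendsto_exp_atTop.comp (hμ.const_mul_atTop (by norm_num)))
    simpa using (h4.const_div_atTop 2).const_sub 1
  have h5 : Tendsto (fun k => Real.arctan ((np:ℝ) / nm)
      - Real.arctan ((np:ℝ) / nm * Real.tanh (μ k))) atTop (nhds 0) := by
    have := ((Real.continuous_arctan.tendsto _).comp
      (htanh.const_mul ((np:ℝ) / nm))).const_sub (Real.arctan ((np:ℝ) / nm))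
    simpa using this
  refine h5.congr' ?_
  filter_upwards [eventually_ge_atTop 1] with k hk
  rw [← key k hk]; ring
end

section
/- Fix integers n₊ ≥ 1 and n₋ ≥ 1. Let μ be the unique solution in (0, π) of n₊·cot μ + n₋·coth μ = 0 and let ν be the unique solution in (0, π) of n₋·cot ν + n₊·coth ν = 0. Then μ = ν if and only if n₊ = n₋. (Consequently the point spectrum of the indefinite Kirchhoff Laplacian B is symmetric with respect to the origin if and only if n₊ = n₋.) -/
theorem aux_no_lt (μ ν : ℝ) (h0 : 0 < μ) (hlt : μ < ν) (hpi : ν < Real.pi)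
    (h1 : Real.cos μ * Real.sinh μ + Real.sin μ * Real.cosh μ = 0)
    (h2 : Real.cos ν * Real.sinh ν + Real.sin ν * Real.cosh ν = 0) : False := by
  have a1 := Real.sin_pos_of_pos_of_lt_pi h0 (hlt.trans hpi)
  have a2 := Real.sin_pos_of_pos_of_lt_pi (h0.trans hlt) hpi
  have a3 := Real.sinh_pos_iff.2 h0
  have a4 := Real.sinh_pos_iff.2 (h0.trans hlt)
  have a5 : 0 < Real.sin (ν - μ) :=
    Real.sin_pos_of_pos_of_lt_pi (by linarith) (by linarith)
  have a6 : 0 < Real.sinh (ν - μ) := Real.sinh_pos_iff.2 (by linarith)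
  have key : Real.sin (ν - μ) * (Real.sinh μ * Real.sinh ν)
      + Real.sinh (ν - μ) * (Real.sin μ * Real.sin ν) = 0 := by
    rw [Real.sin_sub, Real.sinh_sub]
    linear_combination Real.sin ν * Real.sinh ν * h1 - Real.sin μ * Real.sinh μ * h2
  have : 0 < Real.sin (ν - μ) * (Real.sinh μ * Real.sinh ν)
      + Real.sinh (ν - μ) * (Real.sin μ * Real.sin ν) := by positivity
  linarith

/-- Let `μ` be the solution in `(0, π)` of `n₊ cot μ + n₋ coth μ = 0` and `ν` the
solution in `(0, π)` of `n₋ cot ν + n₊ coth ν = 0`. Then `μ = ν` iff `n₊ = n₋`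
(symmetry of the spectrum of the indefinite Kirchhoff Laplacian with respect to the
origin iff `n₊ = n₋`). -/
theorem stmt_16 (np nm : ℕ) (hp : 1 ≤ np) (hm : 1 ≤ nm) (μ ν : ℝ)
    (hμ : μ ∈ Set.Ioo 0 Real.pi)
    (hμeq : (np : ℝ) * (Real.cos μ / Real.sin μ)
      + (nm : ℝ) * (Real.cosh μ / Real.sinh μ) = 0)
    (hν : ν ∈ Set.Ioo 0 Real.pi)
    (hνeq : (nm : ℝ) * (Real.cos ν / Real.sin ν)
      + (np : ℝ) * (Real.cosh ν / Real.sinh ν) = 0) :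
    μ = ν ↔ np = nm := by
  have sμ := Real.sin_pos_of_pos_of_lt_pi hμ.1 hμ.2
  have sν := Real.sin_pos_of_pos_of_lt_pi hν.1 hν.2
  have Sμ := Real.sinh_pos_iff.2 hμ.1
  have Sν := Real.sinh_pos_iff.2 hν.1
  have hp' : (0 : ℝ) < np := by exact_mod_cast hp
  have hm' : (0 : ℝ) < nm := by exact_mod_cast hm
  constructor
  · rintro rfl
    have hC : 0 < Real.cosh μ / Real.sinh μ := div_pos (Real.cosh_pos μ) Sμ
    generalize Real.cosh μ / Real.sinh μ = C at *
    generalize Real.cos μ / Real.sin μ = c at *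
    have h : ((np : ℝ) - nm) * (c - C) = 0 := by linear_combination hμeq - hνeq
    rcases mul_eq_zero.1 h with h | h
    · exact_mod_cast sub_eq_zero.1 h
    · have hc : c = C := sub_eq_zero.1 h
      subst hc
      have : 0 < (np : ℝ) * c + nm * c := by positivity
      linarith
  · rintro rfl
    have conv : ∀ x : ℝ, 0 < Real.sin x → 0 < Real.sinh x →
        (np : ℝ) * (Real.cos x / Real.sin x) + np * (Real.cosh x / Real.sinh x) = 0 →
        Real.cos x * Real.sinh x + Real.sin x * Real.cosh x = 0 := by
      intro x h1 h2 h
      rw [← mul_add, div_add_div _ _ h1.ne' h2.ne'] at h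
      rcases mul_eq_zero.1 h with h | h
      · exact absurd h hp'.ne'
      · exact (div_eq_zero_iff.1 h).resolve_right (mul_pos h1 h2).ne'
    have e1 := conv μ sμ Sμ hμeq
    have e2 := conv ν sν Sν hνeq
    rcases lt_trichotomy μ ν with h | h | h
    · exact (aux_no_lt μ ν hμ.1 h hν.2 e1 e2).elim
    · exact h
    · exact (aux_no_lt ν μ hν.1 h hμ.2 e2 e1).elim
end

section
/- Fix an integer n ≥ 1 and let H = ⊕_{j=1}^n L²((0,1), ℂ) with the standard inner product ⟨f, g⟩ = ∑_j ∫₀¹ f_j·conj(g_j). For every δ ∈ (0, 1/2) there exists a bounded linear operator X : H → H which is bijective with bounded inverse and satisfies ⟨Xf, f⟩ ≥ ‖f‖² for all f ∈ H (in particular X is positive), such that: (i) for every f ∈ H and every j, (Xf)_j(x) = f_j(x) for almost every x ∈ (1−δ, 1); and (ii) for every f ∈ H and every j, if f_j agrees almost everywhere with a continuous function on [0,1], then (Xf)_j agrees almost everywhere with a continuous function on [0,1] whose value at 0 is 0. -/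
open MeasureTheory

/-- Lebesgue measure on the unit interval `(0,1)`, the edge measure of the star graph. -/
noncomputable abbrev edgeMeasure : Measure ℝ := volume.restrict (Set.Ioo 0 1)

/-- The Hilbert space `H = ⊕_{j=1}^n L²((0,1), ℂ)` of a star graph with `n` edges. -/
noncomputable abbrev GraphL2 (n : ℕ) := PiLp 2 (fun _ : Fin n => Lp ℂ 2 edgeMeasure)


/-- The dilation `x ↦ x/2`, which maps `(0,1)` to `(0,1/2)`. -/
noncomputable def halfMap (x : ℝ) : ℝ := (1/2) * x

/-- The continuous cutoff `max 0 (1-2x)`, as a real function. -/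
noncomputable def cutR (x : ℝ) : ℝ := max 0 (min 1 (1 - 2 * x))

/-- The cutoff as a complex function. -/
noncomputable def cutC (x : ℝ) : ℂ := (cutR x : ℂ)

lemma continuous_cutR : Continuous cutR := by unfold cutR; fun_prop

lemma continuous_cutC : Continuous cutC :=
  Complex.continuous_ofReal.comp continuous_cutR

lemma norm_cutC_le (x : ℝ) : ‖cutC x‖ ≤ 1 := by
  rw [cutC, Complex.norm_real, Real.norm_eq_abs, abs_of_nonneg (le_max_left _ _)]
  exact max_le zero_le_one (min_le_left _ _)

lemma cutC_zero : cutC 0 = 1 := by simp [cutC, cutR]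

lemma cutC_of_ge {x : ℝ} (hx : 1/2 ≤ x) : cutC x = 0 := by
  have : cutR x = 0 := max_eq_left ((min_le_right _ _).trans (by linarith))
  simp [cutC, this]

lemma conj_cutC (x : ℝ) : (starRingEnd ℂ) (cutC x) = cutC x := Complex.conj_ofReal _

lemma continuous_halfMap : Continuous halfMap := by unfold halfMap; fun_prop

lemma map_half_le : Measure.map halfMap edgeMeasure ≤ (2 : ENNReal) • edgeMeasure := by
  have h1 : halfMap ⁻¹' (Set.Ioo 0 (1/2)) = Set.Ioo 0 1 := by
    ext x
    simp only [halfMap, Set.mem_preimage, Set.mem_Ioo]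
    constructor <;> rintro ⟨h, h'⟩ <;> constructor <;> linarith
  have h2 : Measure.map halfMap volume = (2 : ENNReal) • volume := by
    have := Real.map_volume_mul_left (a := 1/2) (by norm_num)
    change Measure.map halfMap volume = _ at this
    rw [this]
    norm_num
  unfold edgeMeasure
  rw [← h1, ← Measure.restrict_map continuous_halfMap.measurable measurableSet_Ioo, h2,
    Measure.restrict_smul, h1]
  gcongr
  norm_num

lemma half_qmp : Measure.QuasiMeasurePreserving halfMap edgeMeasure edgeMeasure :=
  ⟨continuous_halfMap.measurable,
    (Measure.absolutelyContinuous_of_le map_half_le).trans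
      (Measure.smul_absolutelyContinuous)⟩

/-- `L²(0,1)`. -/
noncomputable abbrev EdgeL2 := Lp ℂ 2 edgeMeasure

lemma memLp_half (g : EdgeL2) : MemLp ((g : ℝ → ℂ) ∘ halfMap) 2 edgeMeasure := by
  have h := MemLp.of_measure_le_smul (by norm_num) map_half_le (Lp.memLp g)
  exact h.comp_of_map continuous_halfMap.aemeasurable

lemma eLpNorm_half_le (g : EdgeL2) : eLpNorm ((g : ℝ → ℂ) ∘ halfMap) 2 edgeMeasure ≤
    (2 : ENNReal) ^ (1 / (2:ENNReal)).toReal * eLpNorm g 2 edgeMeasure := by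
  rw [← eLpNorm_map_measure (Lp.stronglyMeasurable g).aestronglyMeasurable
    continuous_halfMap.aemeasurable, ← smul_eq_mul,
    ← eLpNorm_smul_measure_of_ne_top (by norm_num)]
  exact eLpNorm_mono_measure _ map_half_le

/-- Dilation on `L²(0,1)`. -/
noncomputable def dilL : EdgeL2 →ₗ[ℂ] EdgeL2 where
  toFun g := (memLp_half g).toLp _
  map_add' f g := by
    rw [← MemLp.toLp_add]
    exact MemLp.toLp_congr _ _ (half_qmp.ae_eq_comp (Lp.coeFn_add f g))
  map_smul' c g := by
    rw [RingHom.id_apply, ← MemLp.toLp_const_smul]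
    exact MemLp.toLp_congr _ _ (half_qmp.ae_eq_comp (Lp.coeFn_smul c g))

/-- Dilation on `L²(0,1)`. -/
noncomputable def dil : EdgeL2 →L[ℂ] EdgeL2 :=
  dilL.mkContinuous ((2 : ENNReal) ^ (1 / (2:ENNReal)).toReal).toReal (fun g => by
    change ‖(memLp_half g).toLp _‖ ≤ _
    rw [Lp.norm_toLp, Lp.norm_def, ← ENNReal.toReal_mul]
    refine ENNReal.toReal_mono (ENNReal.mul_ne_top ?_ (Lp.eLpNorm_ne_top g)) (eLpNorm_half_le g)
    exact ENNReal.rpow_ne_top_of_nonneg (by positivity) (by norm_num))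

lemma dil_ae (g : EdgeL2) : (dil g : ℝ → ℂ) =ᵐ[edgeMeasure] (g : ℝ → ℂ) ∘ halfMap :=
  MemLp.coeFn_toLp (memLp_half g)

lemma memLp_cut (g : EdgeL2) : MemLp (fun x => cutC x * g x) 2 edgeMeasure := by
  refine (Lp.memLp g).of_le
    (continuous_cutC.aestronglyMeasurable.mul (Lp.aestronglyMeasurable g)) (ae_of_all _ fun x => ?_)
  rw [norm_mul]
  exact mul_le_of_le_one_left (norm_nonneg _) (norm_cutC_le x)

/-- Multiplication by the cutoff. -/
noncomputable def mulL : EdgeL2 →ₗ[ℂ] EdgeL2 where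
  toFun g := (memLp_cut g).toLp _
  map_add' f g := by
    rw [← MemLp.toLp_add]
    refine MemLp.toLp_congr _ _ ?_
    filter_upwards [Lp.coeFn_add f g] with x hx
    rw [hx, Pi.add_apply, Pi.add_apply, mul_add]
  map_smul' c g := by
    rw [RingHom.id_apply, ← MemLp.toLp_const_smul]
    refine MemLp.toLp_congr _ _ ?_
    filter_upwards [Lp.coeFn_smul c g] with x hx
    simp [hx, mul_left_comm]

/-- Multiplication by the cutoff. -/
noncomputable def mulC : EdgeL2 →L[ℂ] EdgeL2 :=
  mulL.mkContinuous 1 (fun g => by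
    change ‖(memLp_cut g).toLp _‖ ≤ _
    rw [one_mul]
    refine Lp.norm_le_norm_of_ae_le ?_
    filter_upwards [(memLp_cut g).coeFn_toLp] with x hx
    rw [hx, norm_mul]
    exact mul_le_of_le_one_left (norm_nonneg _) (norm_cutC_le x))

lemma mulC_ae (g : EdgeL2) : (mulC g : ℝ → ℂ) =ᵐ[edgeMeasure] fun x => cutC x * g x :=
  MemLp.coeFn_toLp (memLp_cut g)

/-- The operator `Z g (x) = ψ(x) (3 g(x) - 2 g(x/2))`, adjoint of the dilation-with-cutoff `Y`. -/
noncomputable def opZ : EdgeL2 →L[ℂ] EdgeL2 :=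
  mulC ∘L ((3:ℂ) • ContinuousLinearMap.id ℂ EdgeL2 - (2:ℂ) • dil)

lemma opZ_ae (g : EdgeL2) : (opZ g : ℝ → ℂ) =ᵐ[edgeMeasure]
    fun x => cutC x * (3 * g x - 2 * g (halfMap x)) := by
  have h0 : opZ g = mulC ((3:ℂ) • g - (2:ℂ) • dil g) := rfl
  rw [h0]
  filter_upwards [mulC_ae ((3:ℂ) • g - (2:ℂ) • dil g), Lp.coeFn_sub ((3:ℂ) • g) ((2:ℂ) • dil g),
    Lp.coeFn_smul (3:ℂ) g, Lp.coeFn_smul (2:ℂ) (dil g), dil_ae g] with x h1 h2 h3 h4 h5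
  rw [h1, h2, Pi.sub_apply, h3, h4, Pi.smul_apply, Pi.smul_apply, h5]
  rfl

lemma bdd_on (G : ℝ → ℂ) (hG : Continuous G) :
    ∃ C : ℝ, ∀ᵐ x ∂edgeMeasure, ‖G x‖ ≤ C := by
  obtain ⟨C, hC⟩ := (isCompact_Icc (a := (0:ℝ)) (b := 1)).exists_bound_of_continuousOn hG.continuousOn
  refine ⟨C, ?_⟩
  filter_upwards [ae_restrict_mem measurableSet_Ioo] with x hx
  exact hC x (Set.Ioo_subset_Icc_self hx)

lemma integrable_conj_mul (v : EdgeL2) (G : ℝ → ℂ) (hG : Continuous G) :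
    Integrable (fun x => G x * (starRingEnd ℂ) (v x)) edgeMeasure := by
  obtain ⟨C, hC⟩ := bdd_on G hG
  have hv : Integrable (fun x => (starRingEnd ℂ) (v x)) edgeMeasure := by
    have := (Lp.memLp v).integrable (by norm_num)
    exact (Complex.conjLIE.toContinuousLinearEquiv.toContinuousLinearMap).integrable_comp this
  exact hv.bdd_mul hG.aestronglyMeasurable hC

lemma change_var (F : ℝ → ℂ) (hF : ∀ x, 1/2 ≤ x → F x = 0)
    (hi : Integrable F edgeMeasure) :
    ∫ x, F (halfMap x) ∂edgeMeasure = 2 * ∫ x, F x ∂edgeMeasure := by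
  have e : ∀ G : ℝ → ℂ, ∫ x, G x ∂edgeMeasure = ∫ x in (0:ℝ)..1, G x := fun G => by
    rw [intervalIntegral.integral_of_le zero_le_one, integral_Ioc_eq_integral_Ioo]
  rw [e, e]
  have hi' : IntervalIntegrable F volume 0 1 := by
    rw [intervalIntegrable_iff_integrableOn_Ioo_of_le zero_le_one]; exact hi
  have h1 : ∫ x in (0:ℝ)..1, F (halfMap x) = 2 * ∫ x in (0:ℝ)..(1/2), F x := by
    have := intervalIntegral.integral_comp_div (a := 0) (b := 1) (c := 2) F (by norm_num)
    rw [zero_div] at this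
    calc _ = ∫ x in (0:ℝ)..1, F (x / 2) := by
            simp only [halfMap]; congr 1; ext x; congr 1; ring
      _ = _ := by rw [this, Complex.real_smul]; norm_num
  have h2 : ∫ x in (1/2:ℝ)..1, F x = 0 := by
    rw [intervalIntegral.integral_congr (g := fun _ => 0), intervalIntegral.integral_zero]
    intro x hx
    rw [Set.uIcc_of_le (by norm_num)] at hx
    exact hF x hx.1
  rw [h1, ← intervalIntegral.integral_add_adjacent_intervals (a := 0) (b := 1/2) (c := 1) (hi'.mono_set _)
    (hi'.mono_set _), h2, add_zero]
  · rw [Set.uIcc_of_le (by norm_num), Set.uIcc_of_le (by norm_num)]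
    exact Set.Icc_subset_Icc le_rfl (by norm_num)
  · rw [Set.uIcc_of_le (by norm_num), Set.uIcc_of_le (by norm_num)]
    exact Set.Icc_subset_Icc (by norm_num) le_rfl

/-- The formula for `Z* g`. -/
noncomputable def adjFun (g : ℝ → ℂ) (x : ℝ) : ℂ :=
  3 * (cutC x * g x) - 4 * (cutC (2 * x) * g (2 * x))

lemma continuous_adjFun (g : ℝ → ℂ) (hg : Continuous g) : Continuous (adjFun g) := by
  have := continuous_cutC
  unfold adjFun; fun_prop

lemma adj_ae (f : EdgeL2) (g : ℝ → ℂ) (hg : Continuous g) (hfg : (f : ℝ → ℂ) =ᵐ[edgeMeasure] g) :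
    (ContinuousLinearMap.adjoint opZ f : ℝ → ℂ) =ᵐ[edgeMeasure] adjFun g := by
  have hc := continuous_cutC
  have hm : MemLp (adjFun g) 2 edgeMeasure := by
    obtain ⟨C, hC⟩ := bdd_on _ (continuous_adjFun g hg)
    exact MemLp.of_bound (continuous_adjFun g hg).aestronglyMeasurable C hC
  suffices h : ContinuousLinearMap.adjoint opZ f = hm.toLp _ by
    rw [h]; exact hm.coeFn_toLp
  refine ext_inner_left ℂ fun v => ?_
  rw [ContinuousLinearMap.adjoint_inner_right, L2.inner_def, L2.inner_def]
  set F : ℝ → ℂ := fun x => (cutC (2*x) * g (2*x)) * (starRingEnd ℂ) (v x) with hFdef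
  set K : ℝ → ℂ := fun x => (cutC x * g x) * (starRingEnd ℂ) (v x) with hKdef
  have hF : Integrable F edgeMeasure := integrable_conj_mul v _ (by fun_prop)
  have hK : Integrable K edgeMeasure := integrable_conj_mul v _ (by fun_prop)
  have hF' : Integrable (fun x => F (halfMap x)) edgeMeasure := by
    have h1 : Integrable F (Measure.map halfMap edgeMeasure) :=
      (hF.smul_measure (c := 2) (by norm_num)).mono_measure map_half_le
    exact h1.comp_measurable continuous_halfMap.measurable
  have e1 : ∫ x, inner ℂ (opZ v x) (f x) ∂edgeMeasure
      = ∫ x, (3 * K x - 2 * F (halfMap x)) ∂edgeMeasure := by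
    refine integral_congr_ae ?_
    filter_upwards [opZ_ae v, hfg] with x h1 h2
    have h3 : 2 * halfMap x = x := by unfold halfMap; ring
    rw [h1, h2]
    simp only [hFdef, hKdef, h3, RCLike.inner_apply, map_mul, map_sub, conj_cutC, map_ofNat]
    ring
  have e2 : ∫ x, inner ℂ (v x) (hm.toLp _ x) ∂edgeMeasure
      = ∫ x, (3 * K x - 4 * F x) ∂edgeMeasure := by
    refine integral_congr_ae ?_
    filter_upwards [hm.coeFn_toLp] with x h1
    rw [h1]
    simp only [hFdef, hKdef, adjFun, RCLike.inner_apply]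
    ring
  rw [e1, e2, integral_sub (hK.const_mul _) (hF'.const_mul _),
    integral_sub (hK.const_mul _) (hF.const_mul _), integral_const_mul, integral_const_mul,
    integral_const_mul, change_var F (fun x hx => ?_) hF]
  · ring
  · simp only [hFdef]
    rw [cutC_of_ge (by linarith)]; ring

lemma isUnit_opX : IsUnit (1 + opZ * star opZ) := by
  apply CStarAlgebra.isUnit_of_le 1
  simp [mul_star_self_nonneg]

/-- The single edge operator `1 + Y* Y`. -/
noncomputable def opX : EdgeL2 ≃L[ℂ] EdgeL2 :=
  ContinuousLinearEquiv.unitsEquiv ℂ EdgeL2 isUnit_opX.unit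

lemma opX_apply (f : EdgeL2) : opX f = f + opZ (ContinuousLinearMap.adjoint opZ f) := rfl

lemma opX_inner (f : EdgeL2) : (inner ℂ (opX f) f : ℂ) =
    ((‖f‖ ^ 2 + ‖ContinuousLinearMap.adjoint opZ f‖ ^ 2 : ℝ) : ℂ) := by
  rw [opX_apply, inner_add_left, ← ContinuousLinearMap.adjoint_inner_right,
    inner_self_eq_norm_sq_to_K, inner_self_eq_norm_sq_to_K]
  simp

lemma opX_ae (f : EdgeL2) : (opX f : ℝ → ℂ) =ᵐ[edgeMeasure]
    fun x => f x + cutC x * (3 * ContinuousLinearMap.adjoint opZ f x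
      - 2 * ContinuousLinearMap.adjoint opZ f (halfMap x)) := by
  rw [opX_apply]
  filter_upwards [Lp.coeFn_add f (opZ (ContinuousLinearMap.adjoint opZ f)),
    opZ_ae (ContinuousLinearMap.adjoint opZ f)] with x h1 h2
  rw [h1, Pi.add_apply, h2]

lemma opX_cont (f : EdgeL2)
    (h : ∃ g : ℝ → ℂ, ContinuousOn g (Set.Icc 0 1) ∧ (f : ℝ → ℂ) =ᵐ[edgeMeasure] g) :
    ∃ h : ℝ → ℂ, ContinuousOn h (Set.Icc 0 1) ∧ h 0 = 0 ∧
          (opX f : ℝ → ℂ) =ᵐ[edgeMeasure] h := by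
  obtain ⟨g0, hg0, hfg0⟩ := h
  obtain ⟨g, hg, hfg⟩ : ∃ g : ℝ → ℂ, Continuous g ∧ (f : ℝ → ℂ) =ᵐ[edgeMeasure] g := by
    refine ⟨Set.IccExtend zero_le_one ((Set.Icc (0:ℝ) 1).domRestrict g0),
      hg0.domRestrict.Icc_extend', ?_⟩
    filter_upwards [hfg0, ae_restrict_mem measurableSet_Ioo] with x h1 h2
    rw [h1, Set.IccExtend_of_mem _ _ (Set.Ioo_subset_Icc_self h2)]
    rfl
  have ha := adj_ae f g hg hfg
  have hc := continuous_cutC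
  have hh := continuous_halfMap
  have hw := continuous_adjFun g hg
  refine ⟨fun x => g x + cutC x * (3 * adjFun g x - 2 * adjFun g (halfMap x)), ?_, ?_, ?_⟩
  · exact Continuous.continuousOn (by fun_prop)
  · simp only [halfMap, adjFun, mul_zero, cutC_zero]; ring
  · filter_upwards [opX_ae f, hfg, ha, half_qmp.ae_eq_comp ha] with x h1 h2 h3 h4
    simp only [Function.comp_apply] at h4
    rw [h1, h2, h3, h4]

/-- For every `δ ∈ (0, 1/2)` there is a bounded, boundedly invertible operator `X` on
`H = ⊕ⱼ L²((0,1))` with `⟨Xf, f⟩ ≥ ‖f‖²` (in particular `X` is positive) such that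
`(Xf)ⱼ = fⱼ` a.e. on `(1−δ, 1)` for every `j`, and such that whenever `fⱼ` agrees a.e.
with a continuous function on `[0,1]`, `(Xf)ⱼ` agrees a.e. with a continuous function on
`[0,1]` vanishing at `0`. -/
theorem stmt_18 (n : ℕ) (hn : 0 < n) (δ : ℝ) (hδ : δ ∈ Set.Ioo (0:ℝ) (1/2)) :
    ∃ X : GraphL2 n ≃L[ℂ] GraphL2 n,
      (∀ f : GraphL2 n,
        ‖f‖ ^ 2 ≤ (inner ℂ (X f) f : ℂ).re ∧ (inner ℂ (X f) f : ℂ).im = 0) ∧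
      (∀ f : GraphL2 n, ∀ j : Fin n,
        ∀ᵐ x ∂(volume.restrict (Set.Ioo (1 - δ) 1)), (X f j : ℝ → ℂ) x = (f j : ℝ → ℂ) x) ∧
      (∀ f : GraphL2 n, ∀ j : Fin n,
        (∃ g : ℝ → ℂ, ContinuousOn g (Set.Icc 0 1) ∧ (f j : ℝ → ℂ) =ᵐ[edgeMeasure] g) →
        (∃ h : ℝ → ℂ, ContinuousOn h (Set.Icc 0 1) ∧ h 0 = 0 ∧
          (X f j : ℝ → ℂ) =ᵐ[edgeMeasure] h)) := by
  refine ⟨((PiLp.continuousLinearEquiv 2 ℂ (fun _ : Fin n => EdgeL2)).trans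
    (ContinuousLinearEquiv.piCongrRight fun _ => opX)).trans
    (PiLp.continuousLinearEquiv 2 ℂ (fun _ : Fin n => EdgeL2)).symm, ?_, ?_, ?_⟩
  · intro f
    rw [PiLp.inner_apply, PiLp.norm_sq_eq_of_L2]
    have h : ∀ i : Fin n, (inner ℂ (opX (f i)) (f i) : ℂ) = _ := fun i => opX_inner (f i)
    change _ ≤ (∑ i, (inner ℂ (opX (f i)) (f i) : ℂ)).re ∧
      (∑ i, (inner ℂ (opX (f i)) (f i) : ℂ)).im = 0
    simp only [h]
    rw [← Complex.ofReal_sum, Complex.ofReal_re, Complex.ofReal_im]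
    refine ⟨Finset.sum_le_sum fun i _ => ?_, rfl⟩
    have := sq_nonneg ‖ContinuousLinearMap.adjoint opZ (f i)‖
    linarith
  · intro f j
    change ∀ᵐ x ∂(volume.restrict (Set.Ioo (1 - δ) 1)), (opX (f j) : ℝ → ℂ) x = (f j : ℝ → ℂ) x
    have hsub : Set.Ioo (1 - δ) 1 ⊆ Set.Ioo (0:ℝ) 1 :=
      Set.Ioo_subset_Ioo_left (by linarith [hδ.2])
    filter_upwards [ae_restrict_of_ae_restrict_of_subset hsub (opX_ae (f j)),
      ae_restrict_mem measurableSet_Ioo] with x h1 h2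
    rw [h1, cutC_of_ge (by linarith [h2.1, hδ.2])]
    ring
  · intro f j h
    exact opX_cont (f j) h
end
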